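/- arXiv:1502.04460 — 3 statements merged into one kernel-verified Lean document; each statement's English description precedes it below -/
import Mathlib

section
/- Let k be a field of characteristic not 2 and let q1, q2 be quadratic forms in 5 variables over k such that the projective variety X ⊂ P^4_k defined by q1 = q2 = 0 is a smooth surface of dimension 2. Then the binary form f(λ,μ) = det(λ·M1 + μ·M2), where M1 and M2 are the Gram matrices of q1 and q2, is a nonzero homogeneous polynomial of degree 5 that is separable (i.e., has 5 distinct roots in P^1 over an algebraic closure of k). -/
open Matrix MvPolynomial

/-- The binary form `f(λ,μ) = det (λ·M₁ + μ·M₂)` attached to a pencil of quadrics,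
as a polynomial in the two variables `X 0 = λ` and `X 1 = μ`. -/
noncomputable def pencilDet {k : Type*} [Field k] {m : Type*} [Fintype m] [DecidableEq m]
    (M1 M2 : Matrix m m k) : MvPolynomial (Fin 2) k :=
  Matrix.det (Matrix.of fun i j => X 0 * C (M1 i j) + X 1 * C (M2 i j))

section PencilOfQuadrics

variable {K n : Type*} [Field K] [Fintype n]

theorem pencil_kernel_anisotropic {A B : Matrix n n K}
    (hsm : ∀ x : n → K, x ≠ 0 → x ⬝ᵥ A *ᵥ x = 0 → x ⬝ᵥ B *ᵥ x = 0 →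
      LinearIndependent K ![A *ᵥ x, B *ᵥ x])
    {a b c d : K} (h : a * d - b * c ≠ 0) {v : n → K} (hv : v ≠ 0)
    (hker : (c • A + d • B) *ᵥ v = 0) : v ⬝ᵥ (a • A + b • B) *ᵥ v ≠ 0 := by
  intro h0
  have h1 : v ⬝ᵥ (c • A + d • B) *ᵥ v = 0 := by rw [hker, dotProduct_zero]
  simp only [add_mulVec, smul_mulVec, dotProduct_add, dotProduct_smul, smul_eq_mul] at h0 h1 hker
  have hA : v ⬝ᵥ A *ᵥ v = 0 := (mul_eq_zero_iff_left h).1 (by linear_combination d * h0 - b * h1)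
  have hB : v ⬝ᵥ B *ᵥ v = 0 := (mul_eq_zero_iff_left h).1 (by linear_combination a * h1 - c * h0)
  obtain ⟨hc, hd⟩ := LinearIndependent.pair_iff.1 (hsm v hv hA hB) c d hker
  simp [hc, hd] at h

theorem eq_zero_of_kernel_orthogonal [IsAlgClosed K] {M N : Matrix n n K} (hM : M.IsSymm)
    (hreg : ∀ v : n → K, v ≠ 0 → N *ᵥ v = 0 → v ⬝ᵥ M *ᵥ v ≠ 0) {v x : n → K} (hv : v ≠ 0)
    (hNv : N *ᵥ v = 0) (hNx : N *ᵥ x = 0) (hvx : v ⬝ᵥ M *ᵥ x = 0) : x = 0 := by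
  have hα := hreg v hv hNv
  have hxv : x ⬝ᵥ M *ᵥ v = 0 := by
    rw [dotProduct_mulVec, ← mulVec_transpose, hM.eq, dotProduct_comm, hvx]
  obtain ⟨s, hs⟩ := IsAlgClosed.exists_pow_nat_eq (-(x ⬝ᵥ M *ᵥ x) / (v ⬝ᵥ M *ᵥ v)) two_pos
  have hs' : s ^ 2 * (v ⬝ᵥ M *ᵥ v) + x ⬝ᵥ M *ᵥ x = 0 := by
    rw [hs]; field_simp; ring
  have hy : x + s • v = 0 := by
    by_contra hy
    refine hreg _ hy (by simp [mulVec_add, mulVec_smul, hNv, hNx]) ?_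
    simp only [mulVec_add, mulVec_smul, dotProduct_add, add_dotProduct, dotProduct_smul,
      smul_dotProduct, hvx, hxv, smul_eq_mul]
    linear_combination hs'
  have h0 : v ⬝ᵥ M *ᵥ (x + s • v) = 0 := by simp [hy]
  simp only [mulVec_add, mulVec_smul, dotProduct_add, dotProduct_smul, hvx, zero_add,
    smul_eq_mul, mul_eq_zero, hα, or_false] at h0
  simpa [h0] using hy

variable [DecidableEq n]

theorem derivative_det_pencil_ne_zero [IsAlgClosed K] {C D : Matrix n n K} (hC : C.IsSymm)
    (hD : D.IsSymm) {t : K}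
    (hreg : ∀ v : n → K, v ≠ 0 → (D + t • C) *ᵥ v = 0 → v ⬝ᵥ C *ᵥ v ≠ 0)
    (hdet : (D + t • C).det = 0) :
    (Polynomial.derivative (det ((Polynomial.X : Polynomial K) • C.map Polynomial.C +
      D.map Polynomial.C))).eval t ≠ 0 := by
  obtain ⟨v, hv, hker⟩ := exists_mulVec_eq_zero_iff.2 hdet
  obtain ⟨i, hi⟩ := Function.ne_iff.1 hv
  have hN : (D + t • C).IsSymm := hD.add (hC.smul t)
  set P := (Polynomial.X : Polynomial K) • C.map Polynomial.C + D.map Polynomial.C with hP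
  set g := (P.updateRow i fun j => Polynomial.C ((C *ᵥ v) j)).det with hg
  have hrow : ∑ k, Polynomial.C (v k) • P k =
      (Polynomial.X - Polynomial.C t) • fun j => Polynomial.C ((C *ᵥ v) j) := by
    ext1 j
    have h1 := congrFun hker j
    rw [← hC.eq, ← hD.eq] at h1
    simp only [mulVec, dotProduct, Matrix.add_apply, transpose_apply, Matrix.smul_apply, smul_eq_mul,
      Pi.zero_apply, add_mul, Finset.sum_add_distrib] at h1
    have h2 : ∑ k, D k j * v k = - (t * ∑ k, C k j * v k) := by
      rw [Finset.mul_sum]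
      simp only [← mul_assoc]
      linear_combination h1
    have h3 : (C *ᵥ v) j = ∑ k, C k j * v k := by
      conv_lhs => rw [← hC.eq]
      rfl
    have h4 := congrArg Polynomial.C h2
    simp only [map_sum, map_mul, map_neg] at h4
    simp only [hP, Finset.sum_apply, Pi.smul_apply, Matrix.add_apply, Matrix.smul_apply, map_apply, smul_eq_mul,
      mul_add, Finset.sum_add_distrib, h3, map_sum, map_mul, sub_mul]
    rw [sub_eq_add_neg, ← h4, Finset.mul_sum]
    congr 1 <;> exact Finset.sum_congr rfl fun k _ => by ring
  have hfac : Polynomial.C (v i) * P.det = (Polynomial.X - Polynomial.C t) * g := by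
    have h1 := det_updateRow_sum P i fun k => Polynomial.C (v k)
    rw [hrow, det_updateRow_smul] at h1
    exact h1.symm
  have hge : g.eval t = ((D + t • C).updateRow i (C *ᵥ v)).det := by
    rw [hg, ← Polynomial.coe_evalRingHom, RingHom.map_det]
    congr 1
    ext r s
    by_cases hr : r = i
    · subst hr; simp
    · simp [hr, hP, add_comm, mul_comm t]
  have hg0 : g.eval t ≠ 0 := by
    rw [hge]
    intro h0
    obtain ⟨x, hx, hkx⟩ := exists_mulVec_eq_zero_iff.2 h0
    have hj : ∀ j, j ≠ i → ((D + t • C) *ᵥ x) j = 0 := fun j hj => by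
      simpa [mulVec, hj] using congrFun hkx j
    have hvi : v i * ((D + t • C) *ᵥ x) i = 0 := by
      have h1 : v ⬝ᵥ (D + t • C) *ᵥ x = 0 := by
        rw [dotProduct_mulVec, ← mulVec_transpose, hN.eq, hker, zero_dotProduct]
      rwa [dotProduct, Finset.sum_eq_single i (fun j _ h => by rw [hj j h, mul_zero])
        (by simp)] at h1
    refine hx (eq_zero_of_kernel_orthogonal hC hreg hv hker (x := x) ?_ ?_)
    · ext j
      by_cases h : j = i
      · subst h; exact (mul_eq_zero.1 hvi).resolve_left hi
      · exact hj j h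
    · have h1 := congrFun hkx i
      rw [mulVec, updateRow_self] at h1
      rwa [dotProduct_mulVec, ← mulVec_transpose, hC.eq]
  intro h0
  have := congrArg (fun p => (Polynomial.derivative p).eval t) hfac
  simp [h0, Polynomial.derivative_mul] at this
  exact hg0 this.symm

theorem eval_det_pencil (C D : Matrix n n K) (t : K) :
    (det ((Polynomial.X : Polynomial K) • C.map Polynomial.C + D.map Polynomial.C)).eval t =
      (D + t • C).det := by
  rw [← Polynomial.coe_evalRingHom, RingHom.map_det]
  congr 1
  ext r s
  simp [add_comm, mul_comm t]

theorem exists_det_add_smul_ne_zero [IsAlgClosed K] {A B : Matrix n n K} (hA : A.IsSymm)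
    (hB : B.IsSymm)
    (hsm : ∀ x : n → K, x ≠ 0 → x ⬝ᵥ A *ᵥ x = 0 → x ⬝ᵥ B *ᵥ x = 0 →
      LinearIndependent K ![A *ᵥ x, B *ᵥ x]) :
    ∃ s : K, (A + s • B).det ≠ 0 := by
  by_contra! h
  refine derivative_det_pencil_ne_zero (t := 0) hB hA (fun v hv hker => ?_) (h 0) ?_
  · simpa using pencil_kernel_anisotropic (a := 0) (b := 1) (c := 1) (d := 0) hsm (by simp) hv
      (by simpa using hker)
  · have hzero : det ((Polynomial.X : Polynomial K) • B.map Polynomial.C +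
        A.map Polynomial.C) = 0 :=
      Polynomial.funext fun t => by rw [eval_det_pencil, h, Polynomial.eval_zero]
    simp [hzero]

theorem card_roots_det_pencil [IsAlgClosed K] [DecidableEq K] {C D : Matrix n n K}
    (hC : C.IsSymm) (hD : D.IsSymm) (hdet : C.det ≠ 0)
    (hreg : ∀ (t : K) (v : n → K), v ≠ 0 → (D + t • C) *ᵥ v = 0 → v ⬝ᵥ C *ᵥ v ≠ 0) :
    (det ((Polynomial.X : Polynomial K) • C.map Polynomial.C +
      D.map Polynomial.C)).roots.toFinset.card = Fintype.card n := by
  set p := det ((Polynomial.X : Polynomial K) • C.map Polynomial.C + D.map Polynomial.C) with hp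
  have hcoeff : p.coeff (Fintype.card n) ≠ 0 := by
    rwa [hp, Polynomial.coeff_det_X_add_C_card]
  have hp0 : p ≠ 0 := by rintro h; simp [h] at hcoeff
  have hdeg : p.natDegree = Fintype.card n :=
    le_antisymm (Polynomial.natDegree_det_X_add_C_le C D)
      (Polynomial.le_natDegree_of_ne_zero hcoeff)
  have hnodup : p.roots.Nodup := by
    rw [Multiset.nodup_iff_count_le_one]
    intro t
    rw [Polynomial.count_roots]
    by_contra! h
    obtain ⟨h0, h1⟩ := (Polynomial.one_lt_rootMultiplicity_iff_isRoot hp0).1 h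
    refine derivative_det_pencil_ne_zero hC hD (hreg t) ?_ h1
    rw [← eval_det_pencil]
    exact h0
  rw [Multiset.toFinset_card_of_nodup hnodup, ← (IsAlgClosed.splits p).natDegree_eq_card_roots,
    hdeg]

theorem ncard_singular_members [IsAlgClosed K] {A B : Matrix n n K} (hA : A.IsSymm)
    (hB : B.IsSymm)
    (hsm : ∀ x : n → K, x ≠ 0 → x ⬝ᵥ A *ᵥ x = 0 → x ⬝ᵥ B *ᵥ x = 0 →
      LinearIndependent K ![A *ᵥ x, B *ᵥ x]) :
    {t : Projectivization K (Fin 2 → K) | (t.rep 0 • A + t.rep 1 • B).det = 0}.ncard =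
      Fintype.card n := by
  classical
  obtain ⟨s, hs⟩ := exists_det_add_smul_ne_zero hA hB hsm
  have hmember (t : K) : B + t • (A + s • B) = t • A + (1 + t * s) • B := by
    rw [smul_add, add_smul, smul_smul, one_smul]; abel
  have hne (t : K) : ![t, 1 + t * s] ≠ 0 := by
    intro h
    have h0 : t = 0 := congrFun h 0
    have h1 : 1 + t * s = 0 := congrFun h 1
    simp [h0] at h1
  have hcard := card_roots_det_pencil (C := A + s • B) (D := B) (hA.add (hB.smul s)) hB hs
    fun t v hv hker => by
      rw [hmember] at hker
      simpa using pencil_kernel_anisotropic (a := 1) (b := s) hsm (by ring_nf; simp) hv hker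
  have hp0 : det ((Polynomial.X : Polynomial K) • (A + s • B).map Polynomial.C +
      B.map Polynomial.C) ≠ 0 := by
    intro h
    have h1 := Polynomial.coeff_det_X_add_C_card (A + s • B) B
    rw [h, Polynomial.coeff_zero] at h1
    exact hs h1.symm
  have hinj : Function.Injective fun t : K => Projectivization.mk K ![t, 1 + t * s] (hne t) := by
    intro t t' h
    obtain ⟨r, hr⟩ := (Projectivization.mk_eq_mk_iff' ..).1 h
    have h0 : r * t' = t := congrFun hr 0
    have h1 : r * (1 + t' * s) = 1 + t * s := congrFun hr 1
    have h2 : r = 1 := by linear_combination h1 - s * h0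
    rw [← h0, h2, one_mul]
  rw [← hcard, ← Set.ncard_coe_finset, ← Set.ncard_image_of_injective _ hinj]
  congr 1
  ext P
  simp only [Set.mem_ofPred_eq, Set.mem_image, Finset.mem_coe, Multiset.mem_toFinset,
    Polynomial.mem_roots hp0, Polynomial.IsRoot, eval_det_pencil, hmember]
  constructor
  · intro hP
    set x := P.rep 0
    set y := P.rep 1
    have hu : y - s * x ≠ 0 := by
      intro hu
      have hy : y = x * s := by linear_combination hu
      have hx : x ≠ 0 := by
        intro hx
        refine P.rep_nonzero (funext fun i => ?_)
        fin_cases i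
        · exact hx
        · exact hy.trans (by rw [hx, zero_mul]; rfl)
      rw [hy, mul_smul, ← smul_add, det_smul] at hP
      exact mul_ne_zero (pow_ne_zero _ hx) hs hP
    obtain ⟨u, t, hu0, hx, hy⟩ : ∃ u t : K, u ≠ 0 ∧ x = u * t ∧ y = u * (1 + t * s) := by
      refine ⟨y - s * x, x / (y - s * x), hu, (mul_div_cancel₀ _ hu).symm, ?_⟩
      rw [mul_add, ← mul_assoc, mul_div_cancel₀ _ hu]
      ring
    have hrep : u • ![t, 1 + t * s] = P.rep := by
      ext i
      fin_cases i
      · exact hx.symm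
      · exact hy.symm
    refine ⟨t, ?_, ?_⟩
    · rw [hx, hy, mul_smul, mul_smul, ← smul_add, det_smul] at hP
      exact (mul_eq_zero.1 hP).resolve_left (pow_ne_zero _ hu0)
    · conv_rhs => rw [← P.mk_rep]
      exact (Projectivization.mk_eq_mk_iff' ..).2 ⟨u⁻¹, by
        rw [← hrep, smul_smul, inv_mul_cancel₀ hu0, one_smul]⟩
  · rintro ⟨t, ht, rfl⟩
    obtain ⟨r, hr⟩ := Projectivization.exists_smul_eq_mk_rep K _ (hne t)
    rw [← hr]
    change ((r • t) • A + (r • (1 + t * s)) • B).det = 0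
    rw [smul_assoc, smul_assoc, ← smul_add, Units.smul_def, det_smul, ht, mul_zero]

theorem eval_map_pencilDet {k : Type*} [Field k] (φ : k →+* K) (M1 M2 : Matrix n n k)
    (v : Fin 2 → K) :
    MvPolynomial.eval v (MvPolynomial.map φ (pencilDet M1 M2)) =
      (v 0 • M1.map φ + v 1 • M2.map φ).det := by
  rw [pencilDet, RingHom.map_det, RingHom.map_det]
  congr 1
  ext i j
  simp

theorem isHomogeneous_pencilDet (M1 M2 : Matrix n n K) :
    (pencilDet M1 M2).IsHomogeneous (Fintype.card n) := by
  rw [pencilDet, det_apply]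
  refine IsHomogeneous.sum _ _ _ fun σ _ => ?_
  rw [Units.smul_def, zsmul_eq_mul, ← map_intCast (MvPolynomial.C (σ := Fin 2) (R := K))]
  refine IsHomogeneous.C_mul ?_ _
  convert IsHomogeneous.prod Finset.univ _ (fun _ : n => 1) fun i _ => ?_
  · simp
  · have hX (l : Fin 2) (c : K) :
        (MvPolynomial.X l * MvPolynomial.C c : MvPolynomial (Fin 2) K).IsHomogeneous 1 := by
      simpa using (isHomogeneous_X K l).mul (isHomogeneous_C (Fin 2) c)
    exact (hX 0 _).add (hX 1 _)

end PencilOfQuadrics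

/-- If the intersection `X = {q₁ = q₂ = 0} ⊂ P⁴` of two quadrics is smooth of dimension 2
(Jacobian criterion over an algebraic closure), then `f(λ,μ) = det (λ M₁ + μ M₂)` is a nonzero
homogeneous polynomial of degree 5 which is separable, i.e. has exactly 5 distinct roots
in `P¹` over the algebraic closure. -/
theorem stmt0 {k : Type*} [Field k] (h2 : (2 : k) ≠ 0)
    (M1 M2 : Matrix (Fin 5) (Fin 5) k) (hs1 : M1.IsSymm) (hs2 : M2.IsSymm)
    (hsmooth : ∀ x : Fin 5 → AlgebraicClosure k, x ≠ 0 →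
      x ⬝ᵥ (M1.map (algebraMap k (AlgebraicClosure k))).mulVec x = 0 →
      x ⬝ᵥ (M2.map (algebraMap k (AlgebraicClosure k))).mulVec x = 0 →
      LinearIndependent (AlgebraicClosure k)
        ![(M1.map (algebraMap k (AlgebraicClosure k))).mulVec x,
          (M2.map (algebraMap k (AlgebraicClosure k))).mulVec x]) :
    pencilDet M1 M2 ≠ 0 ∧ (pencilDet M1 M2).IsHomogeneous 5 ∧
      {t : Projectivization (AlgebraicClosure k) (Fin 2 → AlgebraicClosure k) |
        MvPolynomial.eval t.rep
          (MvPolynomial.map (algebraMap k (AlgebraicClosure k)) (pencilDet M1 M2)) = 0}.ncard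
        = 5 := by
  have hs1' := hs1.map (algebraMap k (AlgebraicClosure k))
  have hs2' := hs2.map (algebraMap k (AlgebraicClosure k))
  refine ⟨fun h => ?_, by simpa using isHomogeneous_pencilDet M1 M2, ?_⟩
  · obtain ⟨s, hs⟩ := exists_det_add_smul_ne_zero hs1' hs2' hsmooth
    refine hs ?_
    simpa [h] using (eval_map_pencilDet (algebraMap k (AlgebraicClosure k)) M1 M2 ![1, s]).symm
  · simp only [eval_map_pencilDet]
    simpa using ncard_singular_members hs1' hs2' hsmooth
end

section
/- Let X ⊂ P^n (n ≥ 4) be a smooth complete intersection of two quadrics over an algebraically closed field of characteristic not 2, and let D ≅ P^1 be the pencil of quadrics containing X. Define Z = {(q, h) ∈ D × (P^n)* : the quadric q ∩ h is singular}. Then the second projection Z → (P^n)* is a finite flat covering of degree n, and Z is integral (irreducible and reduced). -/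
open Matrix MvPolynomial

/-- The equation of the incidence variety `Z ⊂ D × (Pⁿ)*`, where `D ≅ P¹` is the pencil of
quadrics spanned by `q₁, q₂`: a quadric `λ q₁ + μ q₂` of the pencil meets the hyperplane
`h = {Σ hⱼ xⱼ = 0}` in a singular quadric exactly when `hᵀ · adj(λ M₁ + μ M₂) · h = 0`.
Variables `Sum.inl` are the pencil coordinates `(λ, μ)`, variables `Sum.inr` are the dual
coordinates `(h₀, …, h_n)` of the hyperplane. -/
noncomputable def pencilDualForm {k : Type*} [Field k] {n : ℕ}
    (M1 M2 : Matrix (Fin (n + 1)) (Fin (n + 1)) k) :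
    MvPolynomial (Fin 2 ⊕ Fin (n + 1)) k :=
  ∑ i, ∑ j, X (Sum.inr i) * X (Sum.inr j) *
    (Matrix.adjugate (Matrix.of fun i j =>
      X (Sum.inl 0) * C (M1 i j) + X (Sum.inl 1) * C (M2 i j))) i j

section Diagonalization

variable {k V : Type*} [Field k] [AddCommGroup V] [Module k V]

/-- If the eigenvectors of a self-adjoint endomorphism are anisotropic, its generalized eigenspaces
are eigenspaces. -/
theorem Module.End.maxGenEigenspace_le_eigenspace_of_anisotropic
    (B : V →ₗ[k] V →ₗ[k] k) (T : Module.End k V) (hT : ∀ x y, B (T x) y = B x (T y))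
    (haniso : ∀ (μ : k) (v : V), v ≠ 0 → T v = μ • v → B v v ≠ 0) (μ : k) :
    T.maxGenEigenspace μ ≤ T.eigenspace μ := by
  intro w hw
  obtain ⟨m, hm⟩ := (T.mem_maxGenEigenspace μ w).1 hw
  rw [Module.End.mem_eigenspace_iff]
  induction m with
  | zero => simp_all
  | succ m ih =>
    cases m with
    | zero => simpa [sub_eq_zero] using hm
    | succ m =>
      apply ih
      set u := ((T - μ • 1) ^ m) w with hu
      have h1 : ((T - μ • 1) ^ (m + 1)) w = T u - μ • u := by
        rw [pow_succ', Module.End.mul_apply, ← hu]; simp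
      have h2 : T (T u - μ • u) = μ • (T u - μ • u) := by
        rw [pow_succ', Module.End.mul_apply, h1] at hm
        simpa [sub_eq_zero] using hm
      rw [h1]
      by_contra hne
      refine haniso μ _ hne h2 ?_
      set z := T u - μ • u with hz
      have : B (T u) z = B u (T z) := hT _ _
      rw [h2] at this
      have h3 : B (T u - μ • u) z = 0 := by
        rw [LinearMap.map_sub₂, this, map_smul, map_smul, LinearMap.smul_apply, sub_self]
      exact h3

variable [IsAlgClosed k]

/-- If the eigenvectors of a self-adjoint endomorphism are anisotropic, its eigenspaces are lines. -/
theorem Module.End.exists_eq_smul_of_anisotropic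
    (B : V →ₗ[k] V →ₗ[k] k) (hB : ∀ x y, B x y = B y x) (T : Module.End k V)
    (haniso : ∀ (μ : k) (v : V), v ≠ 0 → T v = μ • v → B v v ≠ 0) {μ : k} {v w : V}
    (hv : v ≠ 0) (hTv : T v = μ • v) (hTw : T w = μ • w) : ∃ c : k, w = c • v := by
  have hvv := haniso μ v hv hTv
  refine ⟨B v w / B v v, ?_⟩
  by_contra hne
  set z := w - (B v w / B v v) • v with hz
  have hz0 : z ≠ 0 := sub_ne_zero.2 hne
  have hTz : T z = μ • z := by
    rw [hz, map_sub, map_smul, hTv, hTw, smul_sub, smul_comm]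
  have hvz : B v z = 0 := by
    simp [hz, hvv]
  have hzz := haniso μ z hz0 hTz
  obtain ⟨s, hs⟩ := IsAlgClosed.exists_pow_nat_eq (-(B z z) / B v v) (n := 2) (by norm_num)
  have hx : B (s • v + z) (s • v + z) = 0 := by
    simp only [map_add, map_smul, LinearMap.add_apply, LinearMap.smul_apply, hvz, hB z v,
      smul_eq_mul]
    have : s ^ 2 * B v v = - B z z := by rw [hs]; field_simp
    linear_combination this
  have hx0 : s • v + z = 0 := by
    by_contra h
    exact haniso μ _ h (by rw [map_add, map_smul, hTv, hTz, smul_add, smul_comm]) hx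
  have : B v (s • v + z) = 0 := by rw [hx0, map_zero]
  simp only [map_add, map_smul, hvz, smul_eq_mul, add_zero, mul_eq_zero, hvv, or_false] at this
  exact hz0 (by simpa [this] using hx0)

/-- A self-adjoint endomorphism with anisotropic eigenvectors has a basis of eigenvectors with
distinct eigenvalues. -/
theorem Module.End.exists_basis_of_anisotropic {ι : Type*} [Finite ι] (b₀ : Module.Basis ι k V)
    (B : V →ₗ[k] V →ₗ[k] k) (hB : ∀ x y, B x y = B y x) (T : Module.End k V)
    (hT : ∀ x y, B (T x) y = B x (T y))
    (haniso : ∀ (μ : k) (v : V), v ≠ 0 → T v = μ • v → B v v ≠ 0) :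
    ∃ (b : Module.Basis ι k V) (μ : ι → k), Function.Injective μ ∧ ∀ i, T (b i) = μ i • b i := by
  have : FiniteDimensional k V := b₀.finiteDimensional_of_finite
  choose v hv using fun μ : T.Eigenvalues =>
    Module.End.HasEigenvalue.exists_hasEigenvector μ.2
  have hli : LinearIndependent k v :=
    T.eigenvectors_linearIndependent' (fun μ : T.Eigenvalues => (μ : k)) Subtype.val_injective v hv
  have hspan : ⊤ ≤ Submodule.span k (Set.range v) := by
    rw [← T.iSup_maxGenEigenspace_eq_top, iSup_le_iff]
    intro μ w hw
    have hw := T.maxGenEigenspace_le_eigenspace_of_anisotropic B hT haniso μ hw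
    rw [Module.End.mem_eigenspace_iff] at hw
    by_cases hw0 : w = 0
    · simp [hw0]
    have hμ : T.HasEigenvalue μ :=
      Module.End.hasEigenvalue_of_hasEigenvector (x := w)
        ⟨Module.End.mem_eigenspace_iff.2 hw, hw0⟩
    let i : T.Eigenvalues := ⟨μ, hμ⟩
    obtain ⟨c, rfl⟩ := T.exists_eq_smul_of_anisotropic B hB haniso (hv i).2
      (hv i).apply_eq_smul hw
    exact Submodule.smul_mem _ _ (Submodule.subset_span ⟨i, rfl⟩)
  let b := Module.Basis.mk hli hspan
  let e := b.indexEquiv b₀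
  refine ⟨b.reindex e, fun i => (e.symm i : k),
    Subtype.val_injective.comp e.symm.injective, fun i => ?_⟩
  rw [Module.Basis.reindex_apply, Module.Basis.mk_apply]
  exact (hv (e.symm i)).apply_eq_smul

/-- The pencil spanned by two quadrics with smooth intersection has a nondegenerate member. -/
theorem exists_det_add_smul_ne_zero_s10 {ι : Type*} [Fintype ι] [DecidableEq ι] (M1 M2 : Matrix ι ι k)
    (hs1 : M1.IsSymm) (hs2 : M2.IsSymm)
    (hsmooth : ∀ x : ι → k, x ≠ 0 → x ⬝ᵥ M1.mulVec x = 0 → x ⬝ᵥ M2.mulVec x = 0 →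
      LinearIndependent k ![M1.mulVec x, M2.mulVec x]) :
    ∃ t : k, (M1 + t • M2).det ≠ 0 := by
  by_contra! hdet
  let N1 := M1.map (Polynomial.C : k →+* Polynomial k)
  let N2 := M2.map (Polynomial.C : k →+* Polynomial k)
  have hev (t : k) (A : Matrix ι ι k) (u : ι → Polynomial k) (i : ι) :
      (((A.map (Polynomial.C : k →+* Polynomial k)) *ᵥ u) i).eval t =
        (A *ᵥ fun j => (u j).eval t) i := by
    simp [Matrix.mulVec, dotProduct, Polynomial.eval_finsetSum]
  have hdet0 : (N1 + (Polynomial.X : Polynomial k) • N2).det = 0 := by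
    refine Polynomial.funext fun t => ?_
    have h := (Polynomial.evalRingHom t).map_det (N1 + (Polynomial.X : Polynomial k) • N2)
    simp only [Polynomial.coe_evalRingHom] at h
    rw [h, Polynomial.eval_zero, ← hdet t]
    congr 1
    ext i j
    simp only [N1, N2, RingHom.mapMatrix_apply, Matrix.map_apply, Matrix.add_apply,
      Matrix.smul_apply, smul_eq_mul, Polynomial.coe_evalRingHom, Polynomial.eval_add,
      Polynomial.eval_mul, Polynomial.eval_C, Polynomial.eval_X]
  obtain ⟨v, hv0, hv⟩ := Matrix.exists_mulVec_eq_zero_iff.2 hdet0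
  obtain ⟨i, hi⟩ := Function.ne_iff.1 hv0
  have hker (s : k) : M1 *ᵥ (fun j => (v j).eval s) + s • M2 *ᵥ (fun j => (v j).eval s) = 0 := by
    ext i
    have := congrArg (Polynomial.eval s) (congrFun hv i)
    simpa [Matrix.add_mulVec, Matrix.smul_mulVec, N1, N2, hev] using this
  have hadj (A : Matrix ι ι k) (hA : A.IsSymm) (x y : ι → k) : x ⬝ᵥ A *ᵥ y = y ⬝ᵥ A *ᵥ x := by
    rw [dotProduct_mulVec, ← mulVec_transpose, hA.eq, dotProduct_comm]
  obtain ⟨t, ht⟩ : ∃ t, (v i).eval t ≠ 0 := by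
    by_contra! h
    exact hi (Polynomial.funext fun t => by simpa using h t)
  set x : ι → k := fun j => (v j).eval t with hx
  have hoff (s : k) (hs : s ≠ t) : x ⬝ᵥ M2 *ᵥ (fun j => (v j).eval s) = 0 := by
    have h1 := congrArg (x ⬝ᵥ ·) (hker s)
    have h2 := congrArg ((fun j => (v j).eval s) ⬝ᵥ ·) (hker t)
    simp only [dotProduct_add, dotProduct_smul, dotProduct_zero, smul_eq_mul] at h1 h2
    rw [← hx, hadj M1 hs1 _ x, hadj M2 hs2 _ x] at h2
    have : (s - t) * (x ⬝ᵥ M2 *ᵥ (fun j => (v j).eval s)) = 0 := by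
      linear_combination h1 - h2
    exact (mul_eq_zero.1 this).resolve_left (sub_ne_zero.2 hs)
  have hx2 : x ⬝ᵥ M2 *ᵥ x = 0 := by
    let p : Polynomial k := ∑ i, Polynomial.C (x i) * (N2 *ᵥ v) i
    have hp (s : k) : p.eval s = x ⬝ᵥ M2 *ᵥ (fun j => (v j).eval s) := by
      simp only [p, Polynomial.eval_finsetSum, Polynomial.eval_mul, Polynomial.eval_C, N2, hev]
      rfl
    have hp0 : p = 0 := by
      refine Polynomial.eq_zero_of_infinite_isRoot p ?_
      refine (Set.Finite.infinite_compl (Set.finite_singleton t)).mono fun s hs => ?_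
      simpa [Polynomial.IsRoot, hp] using hoff s hs
    simpa [hp0] using (hp t).symm
  have hx1 : x ⬝ᵥ M1 *ᵥ x = 0 := by
    simpa only [dotProduct_add, dotProduct_smul, ← hx, hx2, smul_zero, add_zero,
      dotProduct_zero] using congrArg (x ⬝ᵥ ·) (hker t)
  have hx0 : x ≠ 0 := fun h => ht (congrFun h i)
  have := LinearIndependent.pair_iff.1 (hsmooth x hx0 hx1 hx2) 1 t (by simpa using hker t)
  exact one_ne_zero this.1

/-- Two quadrics with smooth intersection are simultaneously diagonalizable, and the diagonal
entries give pairwise distinct points of the projective line. -/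
theorem exists_simultaneous_diagonalization {ι : Type*} [Fintype ι] [DecidableEq ι]
    (M1 M2 : Matrix ι ι k) (hs1 : M1.IsSymm) (hs2 : M2.IsSymm)
    (hsmooth : ∀ x : ι → k, x ≠ 0 → x ⬝ᵥ M1.mulVec x = 0 → x ⬝ᵥ M2.mulVec x = 0 →
      LinearIndependent k ![M1.mulVec x, M2.mulVec x]) :
    ∃ (Q : Matrix ι ι k) (a b : ι → k), IsUnit Q ∧ Qᵀ * M1 * Q = diagonal a ∧
      Qᵀ * M2 * Q = diagonal b ∧ ∀ i j, i ≠ j → a j * b i - b j * a i ≠ 0 := by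
  obtain ⟨t, ht⟩ := exists_det_add_smul_ne_zero_s10 M1 M2 hs1 hs2 hsmooth
  set M0 := M1 + t • M2 with hM0
  have hu : IsUnit M0.det := isUnit_iff_ne_zero.2 ht
  have hs0 : M0.IsSymm := hs1.add (hs2.smul t)
  let T : Module.End k (ι → k) := (M0⁻¹ * M2).mulVecLin
  let B : (ι → k) →ₗ[k] (ι → k) →ₗ[k] k := Matrix.toLinearMap₂' k M0
  have hBapp (x y : ι → k) : B x y = x ⬝ᵥ M0 *ᵥ y := Matrix.toLinearMap₂'_apply' _ _ _
  have hadj (A : Matrix ι ι k) (hA : A.IsSymm) (x y : ι → k) : x ⬝ᵥ A *ᵥ y = y ⬝ᵥ A *ᵥ x := by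
    rw [dotProduct_mulVec, ← mulVec_transpose, hA.eq, dotProduct_comm]
  have hM0T (x : ι → k) : M0 *ᵥ T x = M2 *ᵥ x := by
    simp [T, Matrix.mul_nonsing_inv_cancel_left _ _ hu]
  have hB (x y : ι → k) : B x y = B y x := by
    rw [hBapp, hBapp, hadj M0 hs0]
  have hT (x y : ι → k) : B (T x) y = B x (T y) := by
    rw [hB, hBapp, hBapp, hM0T, hM0T, hadj M2 hs2]
  have haniso (μ : k) (v : ι → k) (hv : v ≠ 0) (hTv : T v = μ • v) : B v v ≠ 0 := by
    intro h
    rw [hBapp] at h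
    have e2 : M2 *ᵥ v = μ • M0 *ᵥ v := by rw [← hM0T, hTv, mulVec_smul]
    have h2 : v ⬝ᵥ M2 *ᵥ v = 0 := by rw [e2, dotProduct_smul, h, smul_zero]
    have e1 : M1 *ᵥ v = M0 *ᵥ v - t • M2 *ᵥ v := by
      rw [hM0, add_mulVec, smul_mulVec]; abel
    have h1 : v ⬝ᵥ M1 *ᵥ v = 0 := by
      rw [e1, dotProduct_sub, dotProduct_smul, h, h2, smul_zero, sub_zero]
    have hdep := LinearIndependent.pair_iff.1 (hsmooth v hv h1 h2) μ (μ * t - 1) (by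
      rw [e1, e2]; module)
    have hμ := hdep.1
    simp [hμ] at hdep
  obtain ⟨b, μ, hμ, hb⟩ :=
    T.exists_basis_of_anisotropic (Pi.basisFun k ι) B hB hT haniso
  have hbb (i j : ι) (hij : i ≠ j) : B (b i) (b j) = 0 := by
    have := hT (b i) (b j)
    rw [hb, hb, map_smul, map_smul, LinearMap.smul_apply, smul_eq_mul, smul_eq_mul] at this
    have h : (μ i - μ j) * B (b i) (b j) = 0 := by linear_combination this
    exact (mul_eq_zero.1 h).resolve_left (sub_ne_zero.2 (hμ.ne hij))
  let Q : Matrix ι ι k := Matrix.of fun i j => b j i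
  have hQ (A : Matrix ι ι k) (i j : ι) : (Qᵀ * A * Q) i j = b i ⬝ᵥ A *ᵥ b j := by
    rw [Matrix.mul_assoc]
    rfl
  have hQ2 (i j : ι) : (Qᵀ * M2 * Q) i j = μ j * B (b i) (b j) := by
    rw [hQ, ← hM0T, hb, mulVec_smul, dotProduct_smul, hBapp, smul_eq_mul]
  have hQ1 (i j : ι) : (Qᵀ * M1 * Q) i j = (1 - t * μ j) * B (b i) (b j) := by
    have : M1 = M0 - t • M2 := by rw [hM0]; abel
    rw [this, Matrix.mul_sub, Matrix.sub_mul, Matrix.mul_smul, Matrix.smul_mul, Matrix.sub_apply,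
      Matrix.smul_apply, hQ2, hQ, hBapp, smul_eq_mul]
    ring
  refine ⟨Q, fun i => (1 - t * μ i) * B (b i) (b i), fun i => μ i * B (b i) (b i), ?_, ?_, ?_, ?_⟩
  · rw [← linearIndependent_cols_iff_isUnit]
    exact b.linearIndependent
  · ext i j
    rw [hQ1, diagonal_apply]
    split_ifs with hij
    · rw [hij]
    · rw [hbb i j hij, mul_zero]
  · ext i j
    rw [hQ2, diagonal_apply]
    split_ifs with hij
    · rw [hij]
    · rw [hbb i j hij, mul_zero]
  · intro i j hij h
    have hne (i : ι) : B (b i) (b i) ≠ 0 := haniso _ _ (b.ne_zero i) (hb i)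
    have : (B (b i) (b i) * B (b j) (b j)) * (μ i - μ j) = 0 := by linear_combination h
    simp [hne, sub_eq_zero, hμ.ne hij] at this

end Diagonalization

section Irreducibility

variable {k : Type*} [Field k]

theorem MvPolynomial.irreducible_X_mul_C_add_X_mul_C {σ : Type*} {i j : σ} (hij : i ≠ j) {a b : k}
    (hab : a ≠ 0 ∨ b ≠ 0) : Irreducible (X i * C a + X j * C b : MvPolynomial σ k) := by
  classical
  have key {i j : σ} (hij : i ≠ j) {a : k} (b : k) (ha : a ≠ 0) :
      Irreducible (X i * C a + X j * C b : MvPolynomial σ k) := by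
    rw [mul_comm (X i)]
    refine irreducible_mul_X_add _ _ i (by simpa using ha) (by simp) (fun h => ?_) ?_
    · have := vars_mul _ _ h
      simp [hij] at this
    · exact ((isUnit_iff_ne_zero.2 ha).map C).isRelPrime_left
  rcases hab with h | h
  · exact key hij b h
  · rw [add_comm]
    exact key hij.symm a h

theorem Polynomial.irreducible_C_mul_X_sq_add_C {R : Type*} [CommRing R] [IsDomain R] {p l d : R}
    (hl : Prime l) (hp : ¬ l ∣ p) (hd : ¬ l ∣ d) (hrel : IsRelPrime p (l * d)) :
    Irreducible (C p * X ^ 2 + C (l * d) : Polynomial R) := by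
  have hp0 : p ≠ 0 := fun h => hp (h ▸ dvd_zero l)
  have hform : (C p * X ^ 2 + C (l * d) : Polynomial R) = C p * X ^ 2 + C 0 * X + C (l * d) := by
    simp
  have hdeg : (C p * X ^ 2 + C (l * d) : Polynomial R).degree = 2 := by
    rw [hform, degree_quadratic hp0]
  have hlead : (C p * X ^ 2 + C (l * d) : Polynomial R).leadingCoeff = p := by
    rw [hform, leadingCoeff_quadratic hp0]
  refine irreducible_of_eisenstein_criterion (P := Ideal.span {l})
    ((Ideal.span_singleton_prime hl.ne_zero).2 hl) ?_ ?_ ?_ ?_ ?_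
  · rwa [hlead, Ideal.mem_span_singleton]
  · intro n hn
    rw [hdeg] at hn
    have hn : n < 2 := by exact_mod_cast hn
    rw [Ideal.mem_span_singleton]
    interval_cases n <;> simp [coeff_C]
  · rw [hdeg]; norm_num
  · rw [Ideal.span_singleton_pow, Ideal.mem_span_singleton]
    intro h
    rw [coeff_add, coeff_C_mul, coeff_X_pow, if_neg two_ne_zero.symm, mul_zero, zero_add,
      coeff_C_zero, pow_two] at h
    exact hd ((mul_dvd_mul_iff_left hl.ne_zero).1 h)
  · intro r hr
    rw [C_dvd_iff_dvd_coeff] at hr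
    refine hrel ?_ ?_
    · simpa [coeff_C] using hr 2
    · simpa using hr 0

theorem sum_sq_mul_prod_erase_succ {R : Type*} [CommRing R] {n : ℕ} (x l : Fin (n + 1) → R) :
    ∑ i, x i ^ 2 * ∏ j ∈ Finset.univ.erase i, l j =
      (∏ j : Fin n, l j.succ) * x 0 ^ 2 +
        l 0 * ∑ i : Fin n, x i.succ ^ 2 * ∏ j ∈ Finset.univ.erase i, l j.succ := by
  simp only [Fin.sum_univ_succ, ← Finset.filter_ne', Finset.prod_filter, Fin.prod_univ_succ,
    Finset.mul_sum]
  congr 1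
  · simp [mul_comm]
  · refine Finset.sum_congr rfl fun i _ => ?_
    simp only [ne_eq, (Fin.succ_ne_zero i).symm, not_false_eq_true, if_true, Fin.succ_inj]
    ring

/-- The diagonal form of the equation of the incidence variety is irreducible. -/
theorem irreducible_sum_sq_mul_prod_erase {n : ℕ} (hn : 1 ≤ n) (a b : Fin (n + 1) → k)
    (hab : ∀ i j, i ≠ j → a j * b i - b j * a i ≠ 0) :
    Irreducible (∑ i, X (Sum.inr i) ^ 2 *
      ∏ j ∈ Finset.univ.erase i, (X (Sum.inl 0) * C (a j) + X (Sum.inl 1) * C (b j)) :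
        MvPolynomial (Fin 2 ⊕ Fin (n + 1)) k) := by
  let l (i : Fin (n + 1)) : MvPolynomial (Fin 2 ⊕ Fin n) k :=
    X (Sum.inl 0) * C (a i) + X (Sum.inl 1) * C (b i)
  let p : MvPolynomial (Fin 2 ⊕ Fin n) k := ∏ j : Fin n, l j.succ
  let d : MvPolynomial (Fin 2 ⊕ Fin n) k :=
    ∑ i : Fin n, X (Sum.inr i) ^ 2 * ∏ j ∈ Finset.univ.erase i, l j.succ
  let s : Fin 2 ⊕ Fin (n + 1) ≃ Option (Fin 2 ⊕ Fin n) :=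
    { toFun := Sum.elim (fun i => some (Sum.inl i))
        (Fin.cases none fun i => some (Sum.inr i))
      invFun := fun o => o.elim (Sum.inr 0) (Sum.map id Fin.succ)
      left_inv := by
        rintro (i | i)
        · rfl
        · refine Fin.cases rfl (fun i => rfl) i
      right_inv := by rintro (_ | _ | _) <;> rfl }
  let e := (renameEquiv k s).trans (optionEquivLeft k (Fin 2 ⊕ Fin n))
  rw [← MulEquiv.irreducible_iff e]
  have hl (i) : e (X (Sum.inl 0) * C (a i) + X (Sum.inl 1) * C (b i)) = Polynomial.C (l i) := by
    simp [e, s, l]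
  have he : e (∑ i, X (Sum.inr i) ^ 2 *
      ∏ j ∈ Finset.univ.erase i, (X (Sum.inl 0) * C (a j) + X (Sum.inl 1) * C (b j))) =
      Polynomial.C p * Polynomial.X ^ 2 + Polynomial.C (l 0 * d) := by
    have h0 : e (X (Sum.inr 0)) = Polynomial.X := by simp [e, s]
    have hs (i : Fin n) : e (X (Sum.inr i.succ)) = Polynomial.C (X (Sum.inr i)) := by simp [e, s]
    clear_value e
    simp only [map_add e, map_mul e] at hl
    rw [sum_sq_mul_prod_erase_succ (fun i => X (Sum.inr i))]
    simp only [map_add e, map_sum e, map_mul e, map_pow e, map_prod e, hl, h0, hs]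
    simp only [p, d, map_sum, map_mul, map_pow, map_prod]
  rw [he]
  have hirr (i) : Irreducible (l i) := by
    refine irreducible_X_mul_C_add_X_mul_C (by simp) ?_
    by_contra! h
    obtain ⟨j, hj⟩ : ∃ j, j ≠ i := by
      have : Nontrivial (Fin (n + 1)) := Fin.nontrivial_iff_two_le.2 (by omega)
      exact exists_ne i
    exact hab i j hj.symm (by simp [h])
  let pt (i : Fin (n + 1)) (x : Fin n → k) : Fin 2 ⊕ Fin n → k := Sum.elim ![b i, - a i] x
  have hev (i j : Fin (n + 1)) (x : Fin n → k) : eval (pt i x) (l j) = a j * b i - b j * a i := by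
    simp [l, pt]; ring
  have hndvd (i x) (q : MvPolynomial (Fin 2 ⊕ Fin n) k) (hq : eval (pt i x) q ≠ 0) :
      ¬ l i ∣ q := by
    rintro ⟨r, rfl⟩
    exact hq (by rw [map_mul, hev]; ring)
  have hevd (i : Fin (n + 1)) (m : Fin n) : eval (pt i (Pi.single m 1)) d =
      ∏ j ∈ Finset.univ.erase m, (a j.succ * b i - b j.succ * a i) := by
    simp only [d, map_sum, map_mul, map_prod, map_pow, hev, eval_X]
    rw [Finset.sum_eq_single m (fun j _ hj => by simp [pt, hj]) (by simp)]
    simp [pt]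
  refine Polynomial.irreducible_C_mul_X_sq_add_C (hirr 0).prime ?_ ?_ ?_
  · refine hndvd 0 0 _ ?_
    simp only [p, map_prod, hev]
    exact Finset.prod_ne_zero_iff.2 fun j _ => hab _ _ (Fin.succ_ne_zero j).symm
  · refine hndvd 0 (Pi.single ⟨0, hn⟩ 1) _ ?_
    rw [hevd]
    exact Finset.prod_ne_zero_iff.2 fun j _ => hab _ _ (Fin.succ_ne_zero j).symm
  · refine IsRelPrime.prod_left fun m _ => (hirr _).isRelPrime_iff_not_dvd.2 ?_
    refine hndvd _ (Pi.single m 1) _ ?_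
    rw [map_mul, hev, hevd]
    refine mul_ne_zero (hab _ _ (Fin.succ_ne_zero m)) (Finset.prod_ne_zero_iff.2 fun j hj => ?_)
    exact hab _ _ ((Fin.succ_injective n).ne (Finset.ne_of_mem_erase hj).symm)

end Irreducibility

section DiagonalForm

variable {k : Type*} [Field k] {n : ℕ}

/-- The equation of the incidence variety in coordinates diagonalizing the pencil. -/
theorem pencilDualForm_mul_C_det_sq (M1 M2 Q : Matrix (Fin (n + 1)) (Fin (n + 1)) k)
    (a b : Fin (n + 1) → k) (h1 : Qᵀ * M1 * Q = diagonal a) (h2 : Qᵀ * M2 * Q = diagonal b) :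
    pencilDualForm M1 M2 * C (Q.det ^ 2) = ∑ i, (∑ j, C (Q j i) * X (Sum.inr j)) ^ 2 *
      ∏ j ∈ Finset.univ.erase i, (X (Sum.inl 0) * C (a j) + X (Sum.inl 1) * C (b j)) := by
  let R := MvPolynomial (Fin 2 ⊕ Fin (n + 1)) k
  let q : Matrix (Fin (n + 1)) (Fin (n + 1)) R := Q.map C
  let L : Matrix (Fin (n + 1)) (Fin (n + 1)) R := Matrix.of fun i j =>
      X (Sum.inl 0) * C (M1 i j) + X (Sum.inl 1) * C (M2 i j)
  let g : Fin (n + 1) → R := fun j => X (Sum.inr j)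
  have hG : pencilDualForm M1 M2 = g ⬝ᵥ L.adjugate *ᵥ g := by
    simp only [pencilDualForm, dotProduct, mulVec, Finset.mul_sum, g, L]
    exact Finset.sum_congr rfl fun i _ => Finset.sum_congr rfl fun j _ => by ring
  have hdet : q.det = C Q.det := ((C : k →+* R).map_det Q).symm
  have hL : L = (X (Sum.inl 0) : R) • M1.map C + (X (Sum.inl 1) : R) • M2.map C := by
    ext1 i j
    simp [L]
  have hC (M : Matrix (Fin (n + 1)) (Fin (n + 1)) k) :
      qᵀ * M.map (C : k →+* R) * q = (Qᵀ * M * Q).map (C : k →+* R) := by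
    simp only [q, Matrix.map_mul, Matrix.transpose_map]
  have hD : qᵀ * L * q = diagonal fun j =>
      X (Sum.inl 0) * C (a j) + X (Sum.inl 1) * C (b j) := by
    rw [hL, Matrix.mul_add, Matrix.add_mul, Matrix.mul_smul, Matrix.mul_smul, Matrix.smul_mul,
      Matrix.smul_mul, hC, hC, h1, h2]
    ext1 i j
    by_cases hij : i = j
    · simp [hij]
    · simp [hij]
  have hadj := congrArg (fun A => q * adjugate A * qᵀ) hD
  simp only [adjugate_mul_distrib, adjugate_diagonal, ← adjugate_transpose] at hadj
  have hl : q * (q.adjugate * (L.adjugate * q.adjugateᵀ)) * qᵀ = (q.det ^ 2) • L.adjugate := by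
    have ht : q.adjugateᵀ * qᵀ = q.det • 1 := by
      rw [← transpose_mul, mul_adjugate, transpose_smul, transpose_one]
    rw [← Matrix.mul_assoc q, mul_adjugate, Matrix.mul_assoc, Matrix.mul_assoc, ht]
    simp [smul_smul, pow_two]
  rw [hl] at hadj
  rw [hG, map_pow, ← hdet, mul_comm, ← smul_eq_mul, ← dotProduct_smul, ← smul_mulVec, hadj,
    Matrix.mul_assoc, ← mulVec_mulVec, ← mulVec_mulVec, dotProduct_mulVec, ← mulVec_transpose]
  simp only [dotProduct, mulVec_diagonal]
  refine Finset.sum_congr rfl fun i _ => ?_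
  have hi : (qᵀ *ᵥ g) i = ∑ j, C (Q j i) * X (Sum.inr j) := rfl
  rw [hi]
  ring

/-- An invertible linear change of the dual coordinates, as an algebra automorphism. -/
theorem exists_algEquiv_X_inr {Q : Matrix (Fin (n + 1)) (Fin (n + 1)) k} (hQ : IsUnit Q) :
    ∃ e : MvPolynomial (Fin 2 ⊕ Fin (n + 1)) k ≃ₐ[k] MvPolynomial (Fin 2 ⊕ Fin (n + 1)) k,
      (∀ i, e (X (Sum.inl i)) = X (Sum.inl i)) ∧
      ∀ i, e (X (Sum.inr i)) = ∑ j, C (Q j i) * X (Sum.inr j) := by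
  let f (A : Matrix (Fin (n + 1)) (Fin (n + 1)) k) :
      MvPolynomial (Fin 2 ⊕ Fin (n + 1)) k →ₐ[k] MvPolynomial (Fin 2 ⊕ Fin (n + 1)) k :=
    aeval (Sum.elim (fun i => X (Sum.inl i)) fun i => ∑ j, C (A j i) * X (Sum.inr j))
  have hf (A A' : Matrix (Fin (n + 1)) (Fin (n + 1)) k) (h : A * A' = 1) :
      (f A).comp (f A') = AlgHom.id k _ := by
    refine algHom_ext fun i => ?_
    rcases i with i | i
    · simp [f]
    · have hi (m) : ∑ j, A m j * A' j i = (1 : Matrix _ _ k) m i := by rw [← h, Matrix.mul_apply]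
      simp only [AlgHom.comp_apply, f, aeval_X, Sum.elim_inr, map_sum, map_mul, algHom_C,
        algebraMap_eq, Finset.mul_sum, AlgHom.id_apply]
      rw [Finset.sum_comm]
      simp only [← mul_assoc, ← C_mul, ← Finset.sum_mul, ← map_sum, mul_comm (A' _ _), hi]
      simp [Matrix.one_apply]
  have hdet := (Matrix.isUnit_iff_isUnit_det Q).1 hQ
  refine ⟨AlgEquiv.ofAlgHom (f Q) (f Q⁻¹) (hf _ _ (Q.mul_nonsing_inv hdet))
    (hf _ _ (Q.nonsing_inv_mul hdet)), fun i => ?_, fun i => ?_⟩ <;> simp [f]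

end DiagonalForm

/-- Let `X ⊂ Pⁿ` (`n ≥ 4`) be a smooth complete intersection of two quadrics over an
algebraically closed field of characteristic not 2, `D ≅ P¹` the pencil of quadrics
containing `X`, and `Z = {(q,h) ∈ D × (Pⁿ)* : q ∩ h is singular}`.  Then the second
projection `Z → (Pⁿ)*` is a finite flat covering of degree `n`, and `Z` is integral:
the defining equation `G` of `Z` is nonzero, homogeneous of degree `n` in the pencil
variables `(λ, μ)` (so that every fibre over a hyperplane is a nonzero binary form of
degree `n`, giving `n` points with multiplicity), its restriction to each hyperplane
`h ≠ 0` is nonzero, and `G` is irreducible. -/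
theorem stmt10 {k : Type*} [Field k] [IsAlgClosed k] (h2 : (2 : k) ≠ 0)
    {n : ℕ} (hn : 4 ≤ n)
    (M1 M2 : Matrix (Fin (n + 1)) (Fin (n + 1)) k) (hs1 : M1.IsSymm) (hs2 : M2.IsSymm)
    (hsmooth : ∀ x : Fin (n + 1) → k, x ≠ 0 →
      x ⬝ᵥ M1.mulVec x = 0 → x ⬝ᵥ M2.mulVec x = 0 →
      LinearIndependent k ![M1.mulVec x, M2.mulVec x]) :
    pencilDualForm M1 M2 ≠ 0 ∧
    (pencilDualForm M1 M2).IsWeightedHomogeneous (Sum.elim (fun _ => 1) (fun _ => 0)) n ∧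
    (∀ h : Fin (n + 1) → k, h ≠ 0 →
      MvPolynomial.aeval (Sum.elim (X : Fin 2 → MvPolynomial (Fin 2) k) (fun j => C (h j)))
        (pencilDualForm M1 M2) ≠ 0) ∧
    Irreducible (pencilDualForm M1 M2) := by
  obtain ⟨Q, a, b, hQ, hM1, hM2, hab⟩ :=
    exists_simultaneous_diagonalization M1 M2 hs1 hs2 hsmooth
  have hdet : Q.det ^ 2 ≠ 0 := pow_ne_zero 2 ((Matrix.isUnit_iff_isUnit_det Q).1 hQ).ne_zero
  have hG := pencilDualForm_mul_C_det_sq M1 M2 Q a b hM1 hM2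
  have hirr : Irreducible (pencilDualForm M1 M2) := by
    obtain ⟨e, hl, hr⟩ := exists_algEquiv_X_inr hQ
    have he := (MulEquiv.irreducible_iff e).2
      (irreducible_sum_sq_mul_prod_erase (by omega : 1 ≤ n) a b hab)
    simp only [map_sum, map_mul, map_pow, map_prod, map_add, hl, hr,
      ← algebraMap_eq, AlgEquiv.commutes] at he
    simp only [algebraMap_eq] at he
    rw [← hG] at he
    exact (irreducible_mul_isUnit ((isUnit_iff_ne_zero.2 hdet).map C)).1 he
  refine ⟨hirr.ne_zero, ?_, ?_, hirr⟩
  · have hG' : pencilDualForm M1 M2 = (pencilDualForm M1 M2 * C (Q.det ^ 2)) *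
        C (Q.det ^ 2)⁻¹ := by
      rw [mul_assoc, ← C_mul, mul_inv_cancel₀ hdet, C_1, mul_one]
    set w : Fin 2 ⊕ Fin (n + 1) → ℕ := Sum.elim (fun _ => 1) (fun _ => 0) with hw
    have hg (i : Fin (n + 1)) : IsWeightedHomogeneous w
        (∑ j, C (Q j i) * X (Sum.inr j) : MvPolynomial (Fin 2 ⊕ Fin (n + 1)) k) 0 :=
      IsWeightedHomogeneous.sum _ _ _ fun j _ =>
        (isWeightedHomogeneous_C w (Q j i)).mul (isWeightedHomogeneous_X k w (Sum.inr j))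
    have hl (j : Fin (n + 1)) : IsWeightedHomogeneous w
        (X (Sum.inl 0) * C (a j) + X (Sum.inl 1) * C (b j) :
          MvPolynomial (Fin 2 ⊕ Fin (n + 1)) k) 1 :=
      ((isWeightedHomogeneous_X k w (Sum.inl 0)).mul (isWeightedHomogeneous_C w (a j))).add
        ((isWeightedHomogeneous_X k w (Sum.inl 1)).mul (isWeightedHomogeneous_C w (b j)))
    have hsum : IsWeightedHomogeneous w (pencilDualForm M1 M2 * C (Q.det ^ 2)) n := by
      rw [hG]
      refine IsWeightedHomogeneous.sum _ _ _ fun i _ => ?_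
      have := ((hg i).pow 2).mul
        (IsWeightedHomogeneous.prod (Finset.univ.erase i) _ (fun _ => 1) fun j _ => hl j)
      simpa using this
    rw [hG']
    simpa using hsum.mul (isWeightedHomogeneous_C w (Q.det ^ 2)⁻¹)
  · intro h hh h0
    apply hh
    have hg (i) : (Qᵀ *ᵥ h) i = 0 := by
      have hi := congrArg (fun p => eval ![b i, - a i] (aeval
        (Sum.elim (X : Fin 2 → MvPolynomial (Fin 2) k) (fun j => C (h j))) p)) hG
      simp only [map_mul, h0, map_zero, zero_mul, map_sum, map_pow, map_prod, map_add, aeval_X,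
        Sum.elim_inl, Sum.elim_inr, algHom_C, algebraMap_eq, eval_C, eval_X] at hi
      rw [Finset.sum_eq_single i ?_ (by simp)] at hi
      · rw [eq_comm, mul_eq_zero, Finset.prod_eq_zero_iff] at hi
        rcases hi with hi | ⟨j, hj, hi⟩
        · exact pow_eq_zero_iff two_ne_zero |>.1 hi
        · refine (hab i j (Finset.ne_of_mem_erase hj).symm ?_).elim
          simp at hi
          linear_combination hi
      · intro j _ hj
        refine mul_eq_zero_of_right _ (Finset.prod_eq_zero (i := i) (by simp [hj.symm]) ?_)
        simp
        ring
    exact (Matrix.mulVec_injective_iff_isUnit.2 ((Matrix.isUnit_transpose Q).2 hQ))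
      ((funext hg).trans (mulVec_zero _).symm)
end

section
/- Let X ⊂ P^n (n ≥ 4) be a smooth complete intersection of two quadrics over a field k of characteristic not 2, D ≅ P^1_k the pencil of quadrics containing X, and Z = {(q,h) ∈ D × (P^n)* : q ∩ h is singular} with its finite flat degree-n projection to (P^n)*. Then the monodromy group of this covering (the Galois group of the Galois closure of the function field extension k(Z)/k((P^n)*)) is isomorphic to the full symmetric group S_n. -/
open Matrix MvPolynomial

/-- A family over which an algebraically independent family of the same finite size is algebraic
is itself algebraically independent. -/
theorem algebraicIndependent_of_isAlgebraic_adjoin {ι ι' k L : Type*} [Finite ι'] [Field k]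
    [Field L] [Algebra k L] (e : ι ≃ ι') {x : ι → L} {y : ι' → L} (hx : AlgebraicIndependent k x)
    (h : ∀ i, IsAlgebraic (Algebra.adjoin k (Set.range y)) (x i)) :
    AlgebraicIndependent k y := by
  have hI : (AlgebraicIndependent.matroid k L).Indep (Set.range x) :=
    AlgebraicIndependent.matroid_indep_iff.mpr hx.to_subtype_range
  have hsub : Set.range x ⊆ (AlgebraicIndependent.matroid k L).closure (Set.range y) := by
    rw [AlgebraicIndependent.matroid_closure_eq]
    rintro _ ⟨i, rfl⟩
    exact h i
  have hcard : (Set.range x).encard = ENat.card ι' := by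
    rw [← Set.image_univ, hx.injective.encard_image, Set.encard_univ, ENat.card_congr e]
  have hle : ENat.card ι' ≤ (AlgebraicIndependent.matroid k L).eRk (Set.range y) := by
    rw [← hcard, ← hI.eRk_eq_encard, ← Matroid.eRk_closure_eq _ (Set.range y)]
    exact Matroid.eRk_mono _ hsub
  have hy : (Set.range y).encard ≤ ENat.card ι' := by
    rw [← Set.image_univ, ← Set.encard_univ]
    exact Set.encard_image_le _ _
  have hrk := (AlgebraicIndependent.matroid k L).eRk_le_encard (Set.range y)
  have hind : (AlgebraicIndependent.matroid k L).Indep (Set.range y) := by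
    rw [Matroid.indep_iff_eRk_eq_encard_of_finite (Set.finite_range y)]
    exact le_antisymm hrk (hy.trans hle)
  have hinj : Function.Injective y := by
    have : Function.Injective y ↔ Set.InjOn y Set.univ := Set.injOn_univ.symm
    rw [this]
    refine Set.finite_univ.injOn_of_encard_image_eq ?_
    rw [Set.image_univ, Set.encard_univ]
    exact le_antisymm hy (hle.trans hrk)
  have := AlgebraicIndependent.matroid_indep_iff.mp hind
  exact AlgebraicIndependent.of_subtype_range hinj this

namespace Polynomial

theorem eq_zero_of_roots_on_projectiveLine {ι L : Type*} [Fintype ι] [Field L] {n : ℕ}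
    (hι : Fintype.card ι = n + 1) {a b : ι → L} (hab : ∀ i j, i ≠ j → a j * b i - b j * a i ≠ 0)
    {f : L[X]} (hf : f.natDegree ≤ n) (hroot : ∀ i, a i ≠ 0 → f.eval (-b i / a i) = 0)
    (hinf : ∀ i, a i = 0 → f.coeff n = 0) : f = 0 := by
  classical
  by_contra hf0
  let s : Finset ι := Finset.univ.filter fun i => a i ≠ 0
  have hinj : Set.InjOn (fun i => -b i / a i) s := by
    intro i hi j hj hij
    by_contra hne
    simp only [s, Finset.coe_filter, Finset.mem_univ, true_and] at hi hj
    change -b i / a i = -b j / a j at hij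
    rw [div_eq_div_iff hi hj] at hij
    exact hab i j hne (by linear_combination -hij)
  have hcard : s.card ≤ f.natDegree := by
    rw [← Finset.card_image_of_injOn hinj]
    refine (Finset.card_le_card ?_).trans ((Multiset.toFinset_card_le _).trans f.card_roots')
    intro r hr
    obtain ⟨i, hi, rfl⟩ := Finset.mem_image.mp hr
    rw [Multiset.mem_toFinset, mem_roots hf0]
    exact hroot i (Finset.mem_filter.mp hi).2
  by_cases h : ∃ i, a i = 0
  · obtain ⟨i, hi⟩ := h
    have hs : Finset.univ.erase i ⊆ s := by
      intro j hj
      refine Finset.mem_filter.mpr ⟨Finset.mem_univ _, fun h0 => ?_⟩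
      exact hab i j (Finset.ne_of_mem_erase hj).symm (by rw [hi, h0]; ring)
    have h1 := Finset.card_le_card hs
    rw [Finset.card_erase_of_mem (Finset.mem_univ i), Finset.card_univ, hι] at h1
    have h2 : f.natDegree = n := by omega
    have h3 := hinf i hi
    rw [← h2] at h3
    exact hf0 (leadingCoeff_eq_zero.mp h3)
  · push Not at h
    have : s = Finset.univ := Finset.filter_true_of_mem fun i _ => h i
    rw [this, Finset.card_univ, hι] at hcard
    omega

/-- Lagrange interpolation at pairwise distinct points of the projective line, applied to
`c * ∏ j, (X - τ j)`. -/
theorem sum_interpolation_projectiveLine {ι L : Type*} [Fintype ι] [DecidableEq ι] [Field L]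
    {n : ℕ} (hι : Fintype.card ι = n + 1) {a b : ι → L}
    (hab : ∀ i j, i ≠ j → a j * b i - b j * a i ≠ 0) (c : L) (τ : Fin n → L) :
    ∑ i, C (c * (∏ j, (b i + a i * τ j)) / ∏ j ∈ Finset.univ.erase i, (a j * b i - b j * a i)) *
      ∏ j ∈ Finset.univ.erase i, (C (a j) * X + C (b j)) = C c * ∏ j, (X - C (τ j)) := by
  have hκ : ∀ i, ∏ j ∈ Finset.univ.erase i, (a j * b i - b j * a i) ≠ 0 := fun i =>
    Finset.prod_ne_zero_iff.mpr fun j hj => hab i j (Finset.ne_of_mem_erase hj).symm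
  have hcard : ∀ i : ι, (Finset.univ.erase i).card = n := fun i => by
    rw [Finset.card_erase_of_mem (Finset.mem_univ i), Finset.card_univ, hι]; rfl
  have hlin : ∀ j, (C (a j) * X + C (b j)).natDegree ≤ 1 := fun j => natDegree_linear_le
  have hprod : ∀ i, (∏ j ∈ Finset.univ.erase i, (C (a j) * X + C (b j))).coeff n =
      ∏ j ∈ Finset.univ.erase i, a j := fun i => by
    have := coeff_prod_of_natDegree_le (Finset.univ.erase i)
      (fun j => C (a j) * X + C (b j)) 1 fun j _ => hlin j
    rw [hcard, mul_one] at this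
    rw [this]
    simp
  rw [← sub_eq_zero]
  refine eq_zero_of_roots_on_projectiveLine hι hab ?_ ?_ ?_
  · refine (natDegree_sub_le _ _).trans (max_le ?_ ?_)
    · refine natDegree_sum_le_of_forall_le _ _ fun i _ => ?_
      refine (natDegree_C_mul_le _ _).trans ((natDegree_prod_le _ _).trans ?_)
      refine (Finset.sum_le_card_nsmul _ _ 1 fun j _ => hlin j).trans ?_
      simp [hcard]
    · refine (natDegree_C_mul_le _ _).trans ((natDegree_prod_le _ _).trans ?_)
      simp
  · intro i hi
    rw [eval_sub, eval_finsetSum, Finset.sum_eq_single i]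
    · simp only [eval_mul, eval_C, eval_prod, eval_add, eval_X, eval_sub]
      have h1 : ∏ j, (-b i / a i - τ j) = (-1 / a i) ^ n * ∏ j, (b i + a i * τ j) := by
        have : (-1 / a i) ^ n = ∏ _j : Fin n, (-1 / a i) := by
          rw [Finset.prod_const, Finset.card_univ, Fintype.card_fin]
        rw [this, ← Finset.prod_mul_distrib]
        exact Finset.prod_congr rfl fun j _ => by field_simp; ring
      have h2 : ∏ j ∈ Finset.univ.erase i, (a j * (-b i / a i) + b j) =
          (-1 / a i) ^ n * ∏ j ∈ Finset.univ.erase i, (a j * b i - b j * a i) := by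
        rw [← hcard i, ← Finset.prod_const, ← Finset.prod_mul_distrib]
        exact Finset.prod_congr rfl fun j _ => by field_simp; ring
      rw [h1, h2, mul_left_comm, div_mul_cancel₀ _ (hκ i)]
      ring
    · intro l _ hl
      have h0 : eval (-b i / a i) (C (a i) * X + C (b i)) = 0 := by
        simp only [eval_add, eval_mul, eval_C, eval_X]
        field_simp
        ring
      have h1 : ∏ j ∈ Finset.univ.erase l, eval (-b i / a i) (C (a j) * X + C (b j)) = 0 :=
        Finset.prod_eq_zero (Finset.mem_erase.mpr ⟨hl.symm, Finset.mem_univ i⟩) h0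
      rw [eval_mul, eval_prod, h1, mul_zero]
    · simp
  · intro i hi
    have hmonic : (∏ j, (X - C (τ j))).coeff n = 1 := by
      have h := monic_prod_X_sub_C τ Finset.univ
      have hd : (∏ j, (X - C (τ j))).natDegree = n := by simp
      rw [Monic, leadingCoeff, hd] at h
      exact h
    rw [coeff_sub, coeff_C_mul, hmonic, finsetSum_coeff, Finset.sum_eq_single i]
    · rw [coeff_C_mul, hprod]
      have := hκ i
      simp only [hi, mul_zero, sub_zero, zero_mul, add_zero, Finset.prod_mul_distrib,
        Finset.prod_const, hcard, Finset.card_univ, Fintype.card_fin] at this ⊢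
      rw [sub_eq_zero, div_mul_eq_mul_div, div_eq_iff this]
      ring
    · intro l _ hl
      rw [coeff_C_mul, hprod,
        Finset.prod_eq_zero (Finset.mem_erase.mpr ⟨hl.symm, Finset.mem_univ i⟩) hi, mul_zero]
    · simp

/-- If every permutation of the distinct roots of `p` in `L` is induced by an automorphism of `L`
over `F`, the Galois group of `p` is the full symmetric group. -/
theorem gal_mulEquiv_perm_of_map_eq_prod {F L : Type*} [Field F] [Field L] [Algebra F L] {n : ℕ}
    {p : F[X]} {c : L} (hc : c ≠ 0) {τ : Fin n → L} (hτ : Function.Injective τ)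
    (hp : p.map (algebraMap F L) = C c * ∏ j, (X - C (τ j)))
    (hσ : ∀ σ : Equiv.Perm (Fin n), ∃ φ : L ≃ₐ[F] L, ∀ j, φ (τ j) = τ (σ j)) :
    Nonempty (p.Gal ≃* Equiv.Perm (Fin n)) := by
  have hne : p.map (algebraMap F L) ≠ 0 := by
    rw [hp]
    exact mul_ne_zero (C_ne_zero.mpr hc) (monic_prod_X_sub_C τ Finset.univ).ne_zero
  have : Fact (p.map (algebraMap F L)).Splits := ⟨by
    rw [hp]
    exact (Splits.C c).mul (Splits.prod fun j _ => Splits.X_sub_C (τ j))⟩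
  have hmem : ∀ x, x ∈ p.rootSet L ↔ ∃ j, τ j = x := fun x => by
    rw [mem_rootSet', and_iff_right hne, aeval_def, ← eval_map, hp]
    simp [hc, eval_prod, Finset.prod_eq_zero_iff, sub_eq_zero, eq_comm (a := x)]
  let e : Fin n ≃ p.rootSet L :=
    Equiv.ofBijective (fun j => ⟨τ j, (hmem _).mpr ⟨j, rfl⟩⟩)
      ⟨fun i j hij => hτ (congrArg Subtype.val hij), fun ⟨x, hx⟩ => by
        obtain ⟨j, rfl⟩ := (hmem x).mp hx
        exact ⟨j, rfl⟩⟩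
  have hsurj : Function.Surjective (Gal.galActionHom p L) := by
    intro π
    obtain ⟨φ, hφ⟩ := hσ ((e.trans π).trans e.symm)
    refine ⟨Gal.restrict p L φ, Equiv.ext fun x => Subtype.ext ?_⟩
    obtain ⟨j, rfl⟩ := e.surjective x
    rw [Gal.galActionHom_restrict]
    refine (hφ j).trans ?_
    exact congrArg Subtype.val (e.apply_symm_apply (π (e j)))
  exact ⟨(MulEquiv.ofBijective _ ⟨Gal.galActionHom_injective p L, hsurj⟩).trans
    e.permCongrHom.symm⟩

end Polynomial

namespace LinearMap.BilinForm

section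

variable {k V : Type*} [Field k] [AddCommGroup V] [Module k V]

/-- Splitting off a common eigenvector: if `C x` is a multiple of `B x` and `B x x ≠ 0`, the
`B`-orthogonal complement of `x` inherits smoothness, and a basis of it which is orthogonal
for both forms extends by `x`. -/
theorem exists_basis_iIsOrtho_of_eigenvector {d : ℕ} {B C : LinearMap.BilinForm k V}
    (hB : B.IsSymm) (hC : C.IsSymm)
    (hBC : ∀ x, x ≠ 0 → B x x = 0 → C x x = 0 → LinearIndependent k ![B x, C x])
    {x : V} {c : k} (hx : B x x ≠ 0) (hc : C x = c • B x)
    (ih : ∀ W : Submodule k V, IsCompl (k ∙ x) W →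
      (∀ w : W, w ≠ 0 → B.restrict W w w = 0 → C.restrict W w w = 0 →
        LinearIndependent k ![B.restrict W w, C.restrict W w]) →
      ∃ v : Module.Basis (Fin d) k W, (B.restrict W).IsOrthoᵢ v ∧ (C.restrict W).IsOrthoᵢ v) :
    ∃ v : Module.Basis (Fin (d + 1)) k V, B.IsOrthoᵢ v ∧ C.IsOrthoᵢ v := by
  have hcompl := isCompl_span_singleton_orthogonal hx
  have hBx : ∀ w ∈ B.orthogonal (k ∙ x), B x w = 0 := fun w hw =>
    hw x (Submodule.mem_span_singleton_self x)
  have hCx : ∀ w ∈ B.orthogonal (k ∙ x), C x w = 0 := fun w hw => by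
    rw [hc, LinearMap.smul_apply, hBx w hw, smul_zero]
  obtain ⟨v', hv₁, hv₂⟩ := ih _ hcompl (by
    intro w hw hB0 hC0
    have hli := hBC w (by simpa using hw) hB0 hC0
    rw [LinearIndependent.pair_iff] at hli ⊢
    intro s t hst
    refine hli s t (LinearMap.ext fun z => ?_)
    obtain ⟨y, hy, u, hu, rfl⟩ := Submodule.mem_sup.mp
      (hcompl.sup_eq_top ▸ Submodule.mem_top : z ∈ (k ∙ x) ⊔ B.orthogonal (k ∙ x))
    obtain ⟨e, rfl⟩ := Submodule.mem_span_singleton.mp hy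
    have h1 : s * B w u + t * C w u = 0 := LinearMap.congr_fun hst ⟨u, hu⟩
    have h2 : B w x = 0 := by rw [hB.eq]; exact hBx w w.2
    have h3 : C w x = 0 := by rw [hC.eq]; exact hCx w w.2
    simpa [h2, h3] using h1)
  let b := Module.Basis.mkFinCons x v'
    (by
      intro e y hy he
      have h := congrArg (B x) he
      rw [map_add, map_smul, hBx y hy, add_zero, map_zero, smul_eq_mul] at h
      exact (mul_eq_zero.mp h).resolve_right hx)
    (by
      intro z
      refine ⟨-B x z / B x x, fun y hy => ?_⟩
      obtain ⟨e, rfl⟩ := Submodule.mem_span_singleton.mp hy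
      change B (e • x) _ = 0
      rw [map_smul, smul_apply, map_add, map_smul, smul_eq_mul, smul_eq_mul,
        div_mul_cancel₀ _ hx, add_neg_cancel, mul_zero])
  have hortho : ∀ {D : LinearMap.BilinForm k V}, D.IsSymm →
      (∀ w ∈ B.orthogonal (k ∙ x), D x w = 0) →
      (D.restrict (B.orthogonal (k ∙ x))).IsOrthoᵢ v' → D.IsOrthoᵢ b := by
    intro D hD hDx hDv
    rw [Module.Basis.coe_mkFinCons]
    intro j i
    refine Fin.cases ?_ (fun i => ?_) i <;> refine Fin.cases ?_ (fun j => ?_) j <;> intro hij <;>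
      simp only [Function.onFun, Fin.cons_zero, Fin.cons_succ, Function.comp_apply]
    · exact (hij rfl).elim
    · change D _ _ = 0
      rw [hD.eq]
      exact hDx _ (v' j).2
    · exact hDx _ (v' i).2
    · exact hDv (ne_of_apply_ne _ hij)
  exact ⟨b, hortho hB hBx hv₁, hortho hC hCx hv₂⟩

theorem exists_basis_iIsOrtho_of_pencil [IsAlgClosed k] [FiniteDimensional k V] {d : ℕ}
    (hd : Module.finrank k V = d) {B₁ B₂ : LinearMap.BilinForm k V}
    (h₁ : B₁.IsSymm) (h₂ : B₂.IsSymm)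
    (hsmooth : ∀ x, x ≠ 0 → B₁ x x = 0 → B₂ x x = 0 → LinearIndependent k ![B₁ x, B₂ x]) :
    ∃ v : Module.Basis (Fin d) k V, B₁.IsOrthoᵢ v ∧ B₂.IsOrthoᵢ v := by
  induction d generalizing V with
  | zero => exact ⟨basisOfFinrankZero hd, fun i => i.elim0, fun i => i.elim0⟩
  | succ d ih =>
  have hW : ∀ (x : V) (W : Submodule k V), x ≠ 0 → IsCompl (k ∙ x) W →
      Module.finrank k W = d := by
    intro x W hx hcompl
    have := Submodule.finrank_add_eq_of_isCompl hcompl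
    rw [finrank_span_singleton hx, hd] at this
    omega
  by_cases hinj : Function.Injective B₁
  · have : Nontrivial V := Module.nontrivial_of_finrank_pos (R := k) (by omega)
    let e : V ≃ₗ[k] Module.Dual k V :=
      LinearEquiv.ofInjectiveOfFinrankEq B₁ hinj Subspace.dual_finrank_eq.symm
    obtain ⟨μ, hμ⟩ := Module.End.exists_eigenvalue (e.symm.toLinearMap ∘ₗ B₂)
    obtain ⟨x, hx⟩ := hμ.exists_hasEigenvector
    have hc : B₂ x = μ • B₁ x := by
      have h := congrArg e hx.apply_eq_smul
      rw [LinearMap.comp_apply, map_smul] at h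
      exact (e.apply_symm_apply (B₂ x)).symm.trans h
    have hxx : B₁ x x ≠ 0 := by
      intro h0
      have hli := hsmooth x hx.2 h0 (by rw [hc, LinearMap.smul_apply, h0, smul_zero])
      have := LinearIndependent.pair_iff.mp hli μ (-1) (by rw [hc]; simp)
      simpa using this.2
    exact exists_basis_iIsOrtho_of_eigenvector h₁ h₂ hsmooth hxx hc fun W hcompl hs =>
      ih (hW x W hx.2 hcompl) (h₁.restrict W) (h₂.restrict W) hs
  · rw [injective_iff_map_eq_zero] at hinj
    push Not at hinj
    obtain ⟨x, hx, hx0⟩ := hinj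
    have hxx : B₂ x x ≠ 0 := by
      intro h0
      have hli := hsmooth x hx0 (by rw [hx, LinearMap.zero_apply]) h0
      have := LinearIndependent.pair_iff.mp hli 1 0 (by rw [hx]; simp)
      simpa using this.1
    have hsmooth' : ∀ y, y ≠ 0 → B₂ y y = 0 → B₁ y y = 0 → LinearIndependent k ![B₂ y, B₁ y] :=
      fun y hy h2 h1 => LinearIndependent.pair_symm_iff.mp (hsmooth y hy h1 h2)
    obtain ⟨v, hv₂, hv₁⟩ := exists_basis_iIsOrtho_of_eigenvector (c := 0) (d := d) h₂ h₁ hsmooth'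
      hxx (by rw [hx, zero_smul]) fun W hcompl hs => ih (hW x W hx0 hcompl) (h₂.restrict W)
        (h₁.restrict W) hs
    exact ⟨v, hv₁, hv₂⟩

theorem cross_ne_zero_of_iIsOrtho [IsAlgClosed k] {ι : Type*} [Finite ι]
    {B₁ B₂ : LinearMap.BilinForm k V}
    (hsmooth : ∀ x, x ≠ 0 → B₁ x x = 0 → B₂ x x = 0 → LinearIndependent k ![B₁ x, B₂ x])
    (v : Module.Basis ι k V) (h₁ : B₁.IsOrthoᵢ v) (h₂ : B₂.IsOrthoᵢ v) {i j : ι} (hij : i ≠ j) :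
    B₁ (v j) (v j) * B₂ (v i) (v i) - B₂ (v j) (v j) * B₁ (v i) (v i) ≠ 0 := by
  classical
  intro h0
  obtain ⟨s, t, hst, hs1, hs2⟩ : ∃ s t : k, (s ≠ 0 ∨ t ≠ 0) ∧
      s ^ 2 * B₁ (v i) (v i) + t ^ 2 * B₁ (v j) (v j) = 0 ∧
      s ^ 2 * B₂ (v i) (v i) + t ^ 2 * B₂ (v j) (v j) = 0 := by
    generalize B₁ (v i) (v i) = a at *
    generalize B₁ (v j) (v j) = a' at *
    generalize B₂ (v i) (v i) = b at *
    generalize B₂ (v j) (v j) = b' at *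
    have aux : ∀ x y : k, (x ≠ 0 ∨ y ≠ 0) → ∃ s t : k, (s ≠ 0 ∨ t ≠ 0) ∧ s ^ 2 = x ∧ t ^ 2 = y := by
      intro x y hxy
      obtain ⟨s, hs⟩ := IsAlgClosed.exists_pow_nat_eq x two_pos
      obtain ⟨t, ht⟩ := IsAlgClosed.exists_pow_nat_eq y two_pos
      refine ⟨s, t, ?_, hs, ht⟩
      by_contra! hcon
      obtain ⟨rfl, rfl⟩ := hcon
      simp at hs ht
      simp [← hs, ← ht] at hxy
    by_cases ha : a' ≠ 0 ∨ -a ≠ 0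
    · obtain ⟨s, t, hst, hs, ht⟩ := aux _ _ ha
      exact ⟨s, t, hst, by rw [hs, ht]; ring, by rw [hs, ht]; linear_combination h0⟩
    · push Not at ha
      by_cases hb : b' ≠ 0 ∨ -b ≠ 0
      · obtain ⟨s, t, hst, hs, ht⟩ := aux _ _ hb
        exact ⟨s, t, hst, by rw [hs, ht]; linear_combination -h0, by rw [hs, ht]; ring⟩
      · push Not at hb
        exact ⟨1, 0, Or.inl one_ne_zero, by simpa using ha.2, by simpa using hb.2⟩
  have h₁' : ∀ l m, l ≠ m → B₁ (v l) (v m) = 0 := fun l m h => h₁ h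
  have h₂' : ∀ l m, l ≠ m → B₂ (v l) (v m) = 0 := fun l m h => h₂ h
  let z := s • v i + t • v j
  have hz : z ≠ 0 := by
    intro hz
    have hi := congrArg (fun y => v.repr y i) hz
    have hj := congrArg (fun y => v.repr y j) hz
    simp [z, hij, hij.symm] at hi hj
    exact hst.elim (· hi) (· hj)
  have hli := hsmooth z hz
    (by simp [z, h₁' i j hij, h₁' j i hij.symm]; linear_combination hs1)
    (by simp [z, h₂' i j hij, h₂' j i hij.symm]; linear_combination hs2)
  rw [LinearIndependent.pair_iff] at hli
  have hval : ∀ α β : k,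
      s * (α * B₁ (v i) (v i) + β * B₂ (v i) (v i)) = 0 →
      t * (α * B₁ (v j) (v j) + β * B₂ (v j) (v j)) = 0 → α = 0 ∧ β = 0 := by
    intro α β hi hj
    refine hli α β (v.ext fun l => ?_)
    simp only [z, LinearMap.add_apply, LinearMap.smul_apply, map_add, map_smul, smul_eq_mul,
      LinearMap.zero_apply]
    by_cases hl : i = l
    · subst hl
      rw [h₁' j i hij.symm, h₂' j i hij.symm]
      linear_combination hi
    · by_cases hl' : j = l
      · subst hl'
        rw [h₁' i j hij, h₂' i j hij]
        linear_combination hj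
      · rw [h₁' i l hl, h₂' i l hl, h₁' j l hl', h₂' j l hl']
        ring
  obtain ⟨hb, ha⟩ := hval (B₂ (v j) (v j)) (-B₁ (v j) (v j))
    (by linear_combination -s * h0) (by ring)
  obtain ⟨hb', ha'⟩ := hval (B₂ (v i) (v i)) (-B₁ (v i) (v i))
    (by ring) (by linear_combination t * h0)
  rw [neg_eq_zero] at ha ha'
  exact one_ne_zero (hval 1 0 (by rw [ha', hb']; ring) (by rw [ha, hb]; ring)).1

end

end LinearMap.BilinForm

theorem Matrix.exists_simultaneous_diagonalization {k : Type*} [Field k] [IsAlgClosed k] {n : ℕ}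
    {M₁ M₂ : Matrix (Fin n) (Fin n) k} (h₁ : M₁.IsSymm) (h₂ : M₂.IsSymm)
    (hsmooth : ∀ x : Fin n → k, x ≠ 0 → x ⬝ᵥ M₁.mulVec x = 0 → x ⬝ᵥ M₂.mulVec x = 0 →
      LinearIndependent k ![M₁.mulVec x, M₂.mulVec x]) :
    ∃ (P : Matrix (Fin n) (Fin n) k) (a b : Fin n → k), IsUnit P.det ∧
      Pᵀ * M₁ * P = diagonal a ∧ Pᵀ * M₂ * P = diagonal b ∧
      ∀ i j, i ≠ j → a j * b i - b j * a i ≠ 0 := by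
  have happ : ∀ (M : Matrix (Fin n) (Fin n) k) x y, Matrix.toBilin' M x y = x ⬝ᵥ M.mulVec y :=
    fun M x y => Matrix.toBilin'_apply' M x y
  have hsymm : ∀ {M : Matrix (Fin n) (Fin n) k}, M.IsSymm → ∀ x y,
      x ⬝ᵥ M.mulVec y = y ⬝ᵥ M.mulVec x := by
    intro M hM x y
    rw [dotProduct_comm, ← Matrix.vecMul_transpose, hM.eq, Matrix.dotProduct_mulVec]
  have hB : ∀ {M : Matrix (Fin n) (Fin n) k}, M.IsSymm → (Matrix.toBilin' M).IsSymm :=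
    fun hM => ⟨fun x y => by rw [happ, happ]; exact hsymm hM _ _⟩
  have hs : ∀ x, x ≠ 0 → Matrix.toBilin' M₁ x x = 0 → Matrix.toBilin' M₂ x x = 0 →
      LinearIndependent k ![Matrix.toBilin' M₁ x, Matrix.toBilin' M₂ x] := by
    intro x hx hx1 hx2
    rw [happ] at hx1 hx2
    have hli := hsmooth x hx hx1 hx2
    rw [LinearIndependent.pair_iff] at hli ⊢
    intro s t hst
    refine hli s t (dotProduct_eq_zero _ fun y => ?_)
    have h := LinearMap.congr_fun hst y
    simp only [LinearMap.add_apply, LinearMap.smul_apply, happ, hsymm h₁ x y, hsymm h₂ x y] at h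
    rw [dotProduct_comm, dotProduct_add, dotProduct_smul, dotProduct_smul]
    exact h
  obtain ⟨v, hv₁, hv₂⟩ := LinearMap.BilinForm.exists_basis_iIsOrtho_of_pencil
    (Module.finrank_fin_fun k) (hB h₁) (hB h₂) hs
  have hPM : ∀ M : Matrix (Fin n) (Fin n) k, (Matrix.toBilin' M).IsOrthoᵢ v →
      ((Pi.basisFun k (Fin n)).toMatrix v)ᵀ * M * (Pi.basisFun k (Fin n)).toMatrix v =
        diagonal fun i => Matrix.toBilin' M (v i) (v i) := by
    intro M hM
    ext i j
    have : (((Pi.basisFun k (Fin n)).toMatrix v)ᵀ * M * (Pi.basisFun k (Fin n)).toMatrix v) i j =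
        Matrix.toBilin' M (v i) (v j) := by
      rw [happ, Matrix.mul_assoc]
      rfl
    rw [this]
    by_cases hij : i = j
    · rw [hij, diagonal_apply_eq]
    · rw [diagonal_apply_ne _ hij]
      exact hM hij
  refine ⟨_, _, _, ?_, hPM M₁ hv₁, hPM M₂ hv₂, fun i j hij =>
    LinearMap.BilinForm.cross_ne_zero_of_iIsOrtho hs v hv₁ hv₂ hij⟩
  have := (Pi.basisFun k (Fin n)).invertibleToMatrix v
  exact Matrix.isUnit_det_of_invertible _

/-- Over an algebraically closed field of characteristic not 2, `c + a X` with `c ≠ 0` is a square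
of a power series, because `1 - 4 X = (1 - 2 X f) ^ 2` for the Catalan series `f`. -/
theorem PowerSeries.exists_sq_eq_C_add_C_mul_X {k : Type*} [Field k] [IsAlgClosed k]
    (h2 : (2 : k) ≠ 0) {c : k} (hc : c ≠ 0) (a : k) :
    ∃ w : PowerSeries k, w ^ 2 = PowerSeries.C c + PowerSeries.C a * PowerSeries.X := by
  obtain ⟨s, hs⟩ := IsAlgClosed.exists_pow_nat_eq c two_pos
  let f : PowerSeries k := PowerSeries.catalanSeries.map (Nat.castRingHom k)
  have hf : f ^ 2 * PowerSeries.X + 1 = f := by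
    have := congrArg (PowerSeries.map (Nat.castRingHom k))
      PowerSeries.catalanSeries_sq_mul_X_add_one
    simpa [f] using this
  let r : k := -a / (4 * c)
  have h4 : (4 : k) ≠ 0 := by
    rw [show (4 : k) = 2 * 2 by norm_num]; exact mul_ne_zero h2 h2
  have hr : c * (-4 * r) = a := by simp only [r]; field_simp
  have hg := congrArg (PowerSeries.rescale r) hf
  simp only [map_add, map_mul, map_pow, map_one, PowerSeries.rescale_X] at hg
  refine ⟨PowerSeries.C s * (1 - 2 * (PowerSeries.C r * PowerSeries.X) * PowerSeries.rescale r f),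
    ?_⟩
  rw [← hr, ← hs]
  simp only [map_mul, map_pow, map_neg, map_ofNat]
  linear_combination (4 * PowerSeries.C s ^ 2 * PowerSeries.C r * PowerSeries.X) * hg


/-- A purely transcendental extension by `v` and `t j` together with square roots of
`v ^ 2 * ∏ j, (c i + a i * t j)`, on which permutations of the `t j` act fixing these roots. -/
theorem exists_field_of_sq_roots.{u, w} {k : Type u} [Field k] [IsAlgClosed k]
    (h2 : (2 : k) ≠ 0) (n : ℕ) {ι : Type w} {a c : ι → k} (hc : ∀ i, c i ≠ 0) :
    ∃ (L : Type u) (_ : Field L) (_ : Algebra k L) (v : L) (t : Fin n → L) (w : ι → L),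
      AlgebraicIndependent k (fun o : Option (Fin n) => o.elim v t) ∧
      (∀ i, w i ^ 2 = v ^ 2 * ∏ j, (algebraMap k L (c i) + algebraMap k L (a i) * t j)) ∧
      ∀ σ : Equiv.Perm (Fin n), ∃ φ : L ≃ₐ[k] L,
        (∀ j, φ (t j) = t (σ j)) ∧ ∀ i, φ (w i) = w i := by
  let R := MvPowerSeries (Option (Fin n)) k
  let L := FractionRing R
  choose s hs using fun i => PowerSeries.exists_sq_eq_C_add_C_mul_X h2 (hc i) (a i)
  let r (j : Fin n) : PowerSeries k →ₐ[k] R :=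
    MvPowerSeries.rename (fun _ : Unit => some j)
  let x (o : Option (Fin n)) : R := MvPowerSeries.X o
  let w (i : ι) : R := x none * ∏ j, r j (s i)
  have hrX : ∀ j, r j PowerSeries.X = x (some j) := fun j => MvPowerSeries.rename_X _ _
  have hrC : ∀ j (e : k), r j (PowerSeries.C e) = algebraMap k R e := fun j e => (r j).commutes e
  have hw : ∀ i, w i ^ 2 =
      x none ^ 2 * ∏ j, (algebraMap k R (c i) + algebraMap k R (a i) * x (some j)) := by
    intro i
    rw [mul_pow, ← Finset.prod_pow]
    congr 1
    refine Finset.prod_congr rfl fun j _ => ?_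
    rw [← map_pow, hs, map_add, map_mul, hrC, hrC, hrX]
  refine ⟨L, inferInstance, inferInstance, algebraMap R L (x none),
    fun j => algebraMap R L (x (some j)), fun i => algebraMap R L (w i), ?_, ?_, ?_⟩
  · have hR : AlgebraicIndependent k x := by
      rw [algebraicIndependent_iff_injective_aeval]
      have hcoe : ∀ f : MvPolynomial (Option (Fin n)) k,
          MvPolynomial.aeval x f = (f : MvPowerSeries (Option (Fin n)) k) := by
        intro f
        induction f using MvPolynomial.induction_on with
        | C e =>
          rw [MvPolynomial.aeval_C, MvPolynomial.coe_C]
          rfl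
        | add f g hf hg => rw [map_add, hf, hg, MvPolynomial.coe_add]
        | mul_X f o hf =>
          rw [map_mul, hf, MvPolynomial.aeval_X, MvPolynomial.coe_mul, MvPolynomial.coe_X]
      intro f g hfg
      rw [hcoe, hcoe] at hfg
      exact MvPolynomial.coe_injective _ _ hfg
    have hx : (fun o : Option (Fin n) => o.elim (algebraMap R L (x none))
        fun j => algebraMap R L (x (some j))) = IsScalarTower.toAlgHom k R L ∘ x := by
      ext o
      cases o <;> rfl
    rw [hx]
    exact hR.map' (IsFractionRing.injective R L)
  · intro i
    rw [← map_pow, hw, map_mul, map_pow, map_prod]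
    congr 1
    refine Finset.prod_congr rfl fun j _ => ?_
    rw [map_add, map_mul, ← IsScalarTower.algebraMap_apply, ← IsScalarTower.algebraMap_apply]
  · intro σ
    let ψ : R ≃ₐ[k] R := MvPowerSeries.renameEquiv k σ.optionCongr
    have hψx : ∀ o, ψ (x o) = x (σ.optionCongr o) := fun o => MvPowerSeries.rename_X _ _
    have hψr : ∀ j f, ψ (r j f) = r (σ j) f := fun j f => MvPowerSeries.rename_rename _ _ _
    refine ⟨IsFractionRing.algEquivOfAlgEquiv ψ, fun j => ?_, fun i => ?_⟩
    · rw [IsFractionRing.algEquivOfAlgEquiv_algebraMap, hψx]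
      rfl
    · rw [IsFractionRing.algEquivOfAlgEquiv_algebraMap]
      congr 1
      simp only [w, map_mul, map_prod, hψx, hψr]
      rw [Equiv.prod_comp σ fun j => r j (s i)]
      rfl

/-- The polynomial `G(T, 1, h)` obtained from `pencilDualForm` by choosing coordinates `h` in
a commutative ring. -/
noncomputable def dehomogenizedDualForm {k A : Type*} [Field k] [CommRing A] {n : ℕ}
    (M1 M2 : Matrix (Fin (n + 1)) (Fin (n + 1)) k) (g : k →+* A) (h : Fin (n + 1) → A) :
    Polynomial A :=
  MvPolynomial.eval₂ (Polynomial.C.comp g) (Sum.elim ![Polynomial.X, 1] fun j => Polynomial.C (h j))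
    (pencilDualForm M1 M2)

theorem map_dehomogenizedDualForm {k A B : Type*} [Field k] [CommRing A] [CommRing B] {n : ℕ}
    (M1 M2 : Matrix (Fin (n + 1)) (Fin (n + 1)) k) (g : k →+* A) (h : Fin (n + 1) → A)
    (f : A →+* B) : (dehomogenizedDualForm M1 M2 g h).map f =
      dehomogenizedDualForm M1 M2 (f.comp g) (f ∘ h) := by
  rw [dehomogenizedDualForm, ← Polynomial.coe_mapRingHom, MvPolynomial.hom_eval₂,
    dehomogenizedDualForm]
  congr 1
  · ext; simp
  · ext o
    rcases o with o | o
    · fin_cases o <;> simp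
    · simp

theorem eval₂_pencilDualForm {k A : Type*} [Field k] [CommRing A] {n : ℕ}
    (M1 M2 : Matrix (Fin (n + 1)) (Fin (n + 1)) k) (f : k →+* A) (T : A) (h : Fin (n + 1) → A) :
    MvPolynomial.eval₂ f (Sum.elim ![T, 1] h) (pencilDualForm M1 M2) =
      h ⬝ᵥ (T • M1.map f + M2.map f).adjugate *ᵥ h := by
  have hadj := (MvPolynomial.eval₂Hom f (Sum.elim ![T, 1] h)).map_adjugate
    (Matrix.of fun i j => X (Sum.inl 0) * C (M1 i j) + X (Sum.inl 1) * C (M2 i j))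
  have hM : (MvPolynomial.eval₂Hom f (Sum.elim ![T, 1] h)).mapMatrix
      (Matrix.of fun i j => X (Sum.inl 0) * C (M1 i j) + X (Sum.inl 1) * C (M2 i j)) =
      T • M1.map f + M2.map f := by
    ext i j
    simp
  rw [hM] at hadj
  rw [pencilDualForm, ← MvPolynomial.coe_eval₂Hom, ← hadj]
  simp only [map_sum, map_mul, dotProduct, mulVec, Finset.mul_sum, RingHom.mapMatrix_apply,
    Matrix.map_apply]
  refine Finset.sum_congr rfl fun i _ => Finset.sum_congr rfl fun j _ => ?_
  simp
  ring

theorem Matrix.dotProduct_adjugate_congr {m A : Type*} [Fintype m] [DecidableEq m] [CommRing A]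
    (P N : Matrix m m A) (h : m → A) :
    (Pᵀ *ᵥ h) ⬝ᵥ (Pᵀ * N * P).adjugate *ᵥ (Pᵀ *ᵥ h) = P.det ^ 2 * (h ⬝ᵥ N.adjugate *ᵥ h) := by
  have h1 : (Pᵀ * N * P).adjugate *ᵥ (Pᵀ *ᵥ h) = P.det • P.adjugate *ᵥ (N.adjugate *ᵥ h) := by
    rw [adjugate_mul_distrib, adjugate_mul_distrib, mulVec_mulVec, Matrix.mul_assoc,
      Matrix.mul_assoc, adjugate_mul, det_transpose]
    simp [smul_mulVec]
  rw [h1, dotProduct_smul, dotProduct_mulVec, vecMul_mulVec, transpose_transpose, mul_adjugate]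
  rw [vecMul_smul, vecMul_one, smul_dotProduct, smul_eq_mul, smul_eq_mul]
  ring

theorem Matrix.dotProduct_adjugate_diagonal {m A : Type*} [Fintype m] [DecidableEq m] [CommRing A]
    (d y : m → A) : y ⬝ᵥ (diagonal d).adjugate *ᵥ y =
      ∑ i, y i ^ 2 * ∏ j ∈ Finset.univ.erase i, d j := by
  rw [adjugate_diagonal]
  simp only [mulVec_diagonal, dotProduct]
  exact Finset.sum_congr rfl fun i _ => by ring

theorem C_mul_dehomogenizedDualForm {k L : Type*} [Field k] [Field L] {n : ℕ}
    {M1 M2 P : Matrix (Fin (n + 1)) (Fin (n + 1)) k} {a b : Fin (n + 1) → k}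
    (ha : Pᵀ * M1 * P = diagonal a) (hb : Pᵀ * M2 * P = diagonal b) (g : k →+* L)
    {h y : Fin (n + 1) → L} (hy : (P.map g)ᵀ *ᵥ h = y) :
    Polynomial.C (g P.det ^ 2) * dehomogenizedDualForm M1 M2 g h =
      ∑ i, Polynomial.C (y i ^ 2) * ∏ j ∈ Finset.univ.erase i,
        (Polynomial.C (g (a j)) * Polynomial.X + Polynomial.C (g (b j))) := by
  let f : k →+* Polynomial L := Polynomial.C.comp g
  have hN : (P.map f)ᵀ * ((Polynomial.X : Polynomial L) • M1.map f + M2.map f) * P.map f =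
      diagonal fun j => Polynomial.C (g (a j)) * Polynomial.X + Polynomial.C (g (b j)) := by
    have h1 : (P.map f)ᵀ * M1.map f * P.map f = (diagonal a).map f := by
      rw [← ha, Matrix.map_mul, Matrix.map_mul, transpose_map]
    have h2 : (P.map f)ᵀ * M2.map f * P.map f = (diagonal b).map f := by
      rw [← hb, Matrix.map_mul, Matrix.map_mul, transpose_map]
    rw [Matrix.mul_add, Matrix.add_mul, Matrix.mul_smul, Matrix.smul_mul, h1, h2,
      diagonal_map (map_zero f), diagonal_map (map_zero f), ← diagonal_smul, diagonal_add]
    congr 1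
    ext1 j
    exact congrArg (· + _) (mul_comm _ _)
  have hyC : (P.map f)ᵀ *ᵥ (fun j => Polynomial.C (h j)) = fun j => Polynomial.C (y j) := by
    rw [← hy]
    exact funext fun j => (RingHom.map_mulVec Polynomial.C (P.map g)ᵀ h j).symm
  have hdet : (P.map f).det = Polynomial.C (g P.det) := (f.map_det P).symm
  have key := Matrix.dotProduct_adjugate_congr (P.map f)
    ((Polynomial.X : Polynomial L) • M1.map f + M2.map f) fun j => Polynomial.C (h j)
  rw [hN, hyC, Matrix.dotProduct_adjugate_diagonal, hdet] at key
  rw [dehomogenizedDualForm, eval₂_pencilDualForm, map_pow, ← key]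
  simp

/-- A generic hyperplane `h` over an extension `L` in which the dual form has roots `τ j`, such that
every permutation of the roots is induced by an automorphism of `L` fixing `h`. -/
theorem exists_generic_hyperplane.{u} {k : Type u} [Field k] [IsAlgClosed k] (h2 : (2 : k) ≠ 0)
    {n : ℕ} (hn : n ≠ 0) {M1 M2 P : Matrix (Fin (n + 1)) (Fin (n + 1)) k} {a b : Fin (n + 1) → k}
    (hP : IsUnit P.det) (ha : Pᵀ * M1 * P = diagonal a) (hb : Pᵀ * M2 * P = diagonal b)
    (hab : ∀ i j, i ≠ j → a j * b i - b j * a i ≠ 0) :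
    ∃ (L : Type u) (_ : Field L) (_ : Algebra k L) (h : Fin (n + 1) → L) (c : L) (τ : Fin n → L),
      AlgebraicIndependent k h ∧ c ≠ 0 ∧ Function.Injective τ ∧
      dehomogenizedDualForm M1 M2 (algebraMap k L) h =
        Polynomial.C c * ∏ j, (Polynomial.X - Polynomial.C (τ j)) ∧
      ∀ σ : Equiv.Perm (Fin n), ∃ φ : L ≃ₐ[k] L,
        (∀ j, φ (τ j) = τ (σ j)) ∧ ∀ i, φ (h i) = h i := by
  classical
  obtain ⟨t₀, ht₀⟩ := Infinite.exists_notMem_finset (Finset.univ.image fun i => -b i / a i)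
  have hc : ∀ i, b i + a i * t₀ ≠ 0 := by
    intro i hi
    by_cases hai : a i = 0
    · have : Nontrivial (Fin (n + 1)) := Fin.nontrivial_iff_two_le.mpr (by lia)
      obtain ⟨j, hj⟩ := exists_ne i
      apply hab i j hj.symm
      rw [hai, zero_mul, add_zero] at hi
      rw [hi, hai, mul_zero, mul_zero, sub_zero]
    · refine ht₀ (Finset.mem_image.mpr ⟨i, Finset.mem_univ i, ?_⟩)
      rw [div_eq_iff hai]
      linear_combination -hi
  obtain ⟨L, _, _, v, t, w, hvt, hw, hφ⟩ := exists_field_of_sq_roots h2 n (a := a) hc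
  let g := algebraMap k L
  choose δ hδ using fun i => IsAlgClosed.exists_pow_nat_eq
    (∏ j ∈ Finset.univ.erase i, (a j * b i - b j * a i)) two_pos
  let y (i : Fin (n + 1)) : L := w i / g (δ i)
  let h : Fin (n + 1) → L := (Pᵀ⁻¹).map g *ᵥ y
  let τ (j : Fin n) : L := g t₀ + t j
  have hPT : IsUnit Pᵀ.det := by rwa [det_transpose]
  have hy : (P.map g)ᵀ *ᵥ h = y := by
    rw [mulVec_mulVec, ← transpose_map, ← Matrix.map_mul, mul_nonsing_inv _ hPT,
      Matrix.map_one _ (map_zero g) (map_one g), one_mulVec]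
  have hd : g P.det ^ 2 ≠ 0 := pow_ne_zero 2 ((map_ne_zero g).mpr hP.ne_zero)
  have hv : v ≠ 0 := hvt.ne_zero none
  have hτ : Function.Injective τ := fun i j hij => by
    have := hvt.injective (a₁ := some i) (a₂ := some j) (add_left_cancel hij)
    simpa using this
  have hQ : dehomogenizedDualForm M1 M2 g h =
      Polynomial.C (v ^ 2 / g P.det ^ 2) * ∏ j, (Polynomial.X - Polynomial.C (τ j)) := by
    apply mul_left_cancel₀ (Polynomial.C_ne_zero.mpr hd)
    rw [C_mul_dehomogenizedDualForm ha hb g hy, ← mul_assoc, ← map_mul, mul_div_cancel₀ _ hd,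
      ← Polynomial.sum_interpolation_projectiveLine (a := g ∘ a) (b := g ∘ b)
        (Fintype.card_fin _) fun i j hij => by
          simpa only [Function.comp_apply, ← map_mul, ← map_sub] using
            (map_ne_zero g).mpr (hab i j hij)]
    refine Finset.sum_congr rfl fun i _ => ?_
    congr 2
    rw [div_pow, ← map_pow, hδ, hw, map_prod]
    simp only [Function.comp_apply, map_sub, map_mul]
    congr 2
    refine Finset.prod_congr rfl fun j _ => ?_
    simp only [τ, map_add, map_mul]
    ring
  refine ⟨L, inferInstance, inferInstance, h, v ^ 2 / g P.det ^ 2, τ, ?_,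
    div_ne_zero (pow_ne_zero 2 hv) hd, hτ, hQ, fun σ => ?_⟩
  · let A := Algebra.adjoin k (Set.range h)
    let h' (i : Fin (n + 1)) : A := ⟨h i, Algebra.subset_adjoin (Set.mem_range_self i)⟩
    let q : Polynomial A := dehomogenizedDualForm M1 M2 (algebraMap k A) h'
    have hq : q.map (algebraMap A L) =
        Polynomial.C (v ^ 2 / g P.det ^ 2) * ∏ j, (Polynomial.X - Polynomial.C (τ j)) := by
      rw [map_dehomogenizedDualForm, ← IsScalarTower.algebraMap_eq, ← hQ]
      rfl
    have hmonic : (∏ j, (Polynomial.X - Polynomial.C (τ j))).Monic :=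
      Polynomial.monic_prod_X_sub_C τ Finset.univ
    have hqne : q ≠ 0 := by
      intro h0
      rw [h0, Polynomial.map_zero] at hq
      exact mul_ne_zero (Polynomial.C_ne_zero.mpr (div_ne_zero (pow_ne_zero 2 hv) hd))
        hmonic.ne_zero hq.symm
    have halg : ∀ e : k, IsAlgebraic A (g e) := fun e => by
      simpa [g, ← IsScalarTower.algebraMap_apply k A L] using
        isAlgebraic_algebraMap (R := A) (A := L) (algebraMap k A e)
    refine algebraicIndependent_of_isAlgebraic_adjoin (finSuccEquiv n).symm hvt ?_
    rintro (_ | j)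
    · have hlead : v ^ 2 = g P.det ^ 2 * algebraMap A L (q.coeff n) := by
        have := congrArg (Polynomial.coeff · n) hq
        have hcoeff : (∏ j, (Polynomial.X - Polynomial.C (τ j))).coeff n = 1 := by
          simpa [Polynomial.natDegree_finsetProd_X_sub_C_eq_card] using hmonic.coeff_natDegree
        rw [Polynomial.coeff_map, Polynomial.coeff_C_mul, hcoeff, mul_one] at this
        rw [this, mul_div_cancel₀ _ hd]
      refine IsAlgebraic.of_pow two_pos ?_
      change IsAlgebraic A (v ^ 2)
      rw [hlead]
      exact ((halg _).pow 2).mul (isAlgebraic_algebraMap _)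
    · have hroot : IsAlgebraic A (τ j) := by
        refine ⟨q, hqne, ?_⟩
        rw [Polynomial.aeval_def, ← Polynomial.eval_map, hq, Polynomial.eval_mul,
          Polynomial.eval_prod, Finset.prod_eq_zero (Finset.mem_univ j) (by simp), mul_zero]
      have : t j = τ j - g t₀ := (add_sub_cancel_left _ _).symm
      change IsAlgebraic A (t j)
      rw [this]
      exact hroot.sub (halg t₀)
  · obtain ⟨φ, hφt, hφw⟩ := hφ σ
    have hg : ∀ e, φ (g e) = g e := φ.commutes
    refine ⟨φ, fun j => ?_, fun i => ?_⟩
    · simp only [τ, map_add, hg, hφt]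
    · simp only [h, y, mulVec, dotProduct, Matrix.map_apply, map_sum, map_mul, map_div₀, hg, hφw]

/-- Let `X ⊂ Pⁿ` (`n ≥ 4`) be a smooth complete intersection of two quadrics over an
algebraically closed field `k` of characteristic not 2, and `Z → (Pⁿ)*` the finite flat
degree-`n` covering recording the singular members of the pencil cut on each hyperplane.
Then the monodromy group of this covering — the Galois group of the Galois closure of the
function field extension `k(Z)/k((Pⁿ)*)`, i.e. the Galois group of the degree-`n`
polynomial `p(T) = G(T, 1, h)` over the function field `F` of the dual space — is the full
symmetric group `S_n`. -/
theorem stmt11 {k : Type*} [Field k] [IsAlgClosed k] (h2 : (2 : k) ≠ 0)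
    {n : ℕ} (hn : 4 ≤ n)
    (M1 M2 : Matrix (Fin (n + 1)) (Fin (n + 1)) k) (hs1 : M1.IsSymm) (hs2 : M2.IsSymm)
    (hsmooth : ∀ x : Fin (n + 1) → k, x ≠ 0 →
      x ⬝ᵥ M1.mulVec x = 0 → x ⬝ᵥ M2.mulVec x = 0 →
      LinearIndependent k ![M1.mulVec x, M2.mulVec x])
    (F : Type*) [Field F] [Algebra (MvPolynomial (Fin (n + 1)) k) F]
    [IsFractionRing (MvPolynomial (Fin (n + 1)) k) F]
    (p : Polynomial F)
    (hp : p = MvPolynomial.eval₂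
      ((Polynomial.C).comp ((algebraMap (MvPolynomial (Fin (n + 1)) k) F).comp
        (MvPolynomial.C)))
      (Sum.elim ![Polynomial.X, 1]
        (fun j => Polynomial.C (algebraMap (MvPolynomial (Fin (n + 1)) k) F
          (MvPolynomial.X j))))
      (pencilDualForm M1 M2)) :
    p.natDegree = n ∧ Nonempty (p.Gal ≃* Equiv.Perm (Fin n)) := by
  obtain ⟨P, a, b, hP, ha, hb, hab⟩ := Matrix.exists_simultaneous_diagonalization hs1 hs2 hsmooth
  obtain ⟨L, _, _, h, c, τ, hh, hc, hτ, hQ, hφ⟩ :=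
    exists_generic_hyperplane h2 (by lia) hP ha hb hab
  have hinj : Function.Injective (MvPolynomial.aeval (R := k) h).toRingHom :=
    algebraicIndependent_iff_injective_aeval.mp hh
  let f : F →+* L := IsFractionRing.lift hinj
  have hf : ∀ x, f (algebraMap (MvPolynomial (Fin (n + 1)) k) F x) = MvPolynomial.aeval h x :=
    IsFractionRing.lift_algebraMap hinj
  let _ : Algebra F L := f.toAlgebra
  have hp' : p.map (algebraMap F L) =
      Polynomial.C c * ∏ j, (Polynomial.X - Polynomial.C (τ j)) := by
    have : p = dehomogenizedDualForm M1 M2 ((algebraMap _ F).comp MvPolynomial.C)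
        fun j => algebraMap _ F (MvPolynomial.X j) := hp
    rw [this, map_dehomogenizedDualForm, ← hQ]
    congr 1
    · ext e
      simp [RingHom.algebraMap_toAlgebra, hf]
    · ext j
      simp [RingHom.algebraMap_toAlgebra, hf]
  refine ⟨?_, Polynomial.gal_mulEquiv_perm_of_map_eq_prod hc hτ hp' fun σ => ?_⟩
  · rw [← Polynomial.natDegree_map (algebraMap F L), hp', Polynomial.natDegree_C_mul hc,
      Polynomial.natDegree_finsetProd_X_sub_C_eq_card, Finset.card_univ, Fintype.card_fin]
  · obtain ⟨φ, hφτ, hφh⟩ := hφ σ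
    have hφf : (φ : L →+* L).comp f = f := by
      refine IsLocalization.ringHom_ext (nonZeroDivisors (MvPolynomial (Fin (n + 1)) k)) ?_
      refine MvPolynomial.ringHom_ext (fun e => ?_) fun j => ?_
      · simp [hf]
      · simp [hf, hφh]
    exact ⟨AlgEquiv.ofRingEquiv (f := φ.toRingEquiv) fun x => congrArg (· x) hφf, hφτ⟩
end
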